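/- arXiv:2401.14001 — 9 statements merged into one kernel-verified Lean document; each statement's English description precedes it below -/
import Mathlib

section
/- Let L be a multiplicative lattice and H a wire of L. Then the map r : Set H → Set H sending X ⊆ H to X_r = {h ∈ H | h ≤ sSup X} is a weak ideal system on the monoid H; that is, it satisfies (s1) x*h ∈ X_r for all x ∈ X and h ∈ H, (s2) X ⊆ Y ⊆ H implies X_r ⊆ Y_r, (s3) (X_r)_r = X_r, and (s4) c*X_r ⊆ (c*X)_r for all c ∈ H and X ⊆ H. -/
/-- For a subset `H` of a complete lattice `L` and `X ⊆ H`,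
`rMap H X = X_r = H ∩ [⊥, sSup X] = {h ∈ H | h ≤ sSup X}`. -/
def rMap {L : Type*} [CompleteLattice L] (H : Set L) (X : Set L) : Set L :=
  {h | h ∈ H ∧ h ≤ sSup X}

/-- if `H` is a wire of a multiplicative lattice `L`, then
`X ↦ X_r = {h ∈ H | h ≤ sSup X}` is a weak ideal system on `H`. -/
theorem stmt_0 {L : Type*} [CompleteLattice L] [CommMonoid L]
    (hdist : ∀ (a : L) (S : Set L), a * sSup S = ⨆ b ∈ S, a * b)
    (hone : (1 : L) = ⊤)
    (H : Set L) (hH1 : (1 : L) ∈ H) (hHbot : (⊥ : L) ∈ H)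
    (hHmul : ∀ x ∈ H, ∀ y ∈ H, x * y ∈ H)
    (hgen : ∀ a : L, a = sSup {h | h ∈ H ∧ h ≤ a}) :
    ∀ X : Set L, X ⊆ H →
      ((∀ x ∈ X, ∀ h ∈ H, x * h ∈ rMap H X) ∧
       (∀ Y : Set L, Y ⊆ H → X ⊆ Y → rMap H X ⊆ rMap H Y) ∧
       (rMap H (rMap H X) = rMap H X) ∧
       (∀ c ∈ H, (fun y => c * y) '' rMap H X ⊆ rMap H ((fun y => c * y) '' X))) := by
  intro X hX
  have mul_mono : ∀ a b c : L, b ≤ c → a * b ≤ a * c := fun a b c hbc => by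
    have h := hdist a {b, c}
    rw [sSup_pair, sup_eq_right.mpr hbc, iSup_pair] at h
    exact h ▸ le_sup_left
  refine ⟨fun x hx h hh => ⟨hHmul x (hX hx) h hh, ?_⟩,
    fun Y _ hXY h hh => ⟨hh.1, hh.2.trans (sSup_le_sSup hXY)⟩, ?_, ?_⟩
  · calc x * h ≤ x * 1 := mul_mono x h 1 (hone ▸ le_top)
      _ = x := mul_one x
      _ ≤ sSup X := le_sSup hx
  · refine Set.Subset.antisymm (fun h hh => ⟨hh.1, hh.2.trans (sSup_le fun y hy => hy.2)⟩)
      (fun h hh => ⟨hh.1, le_sSup hh⟩)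
  · rintro c hc _ ⟨y, hy, rfl⟩
    refine ⟨hHmul c hc y hy.1, ?_⟩
    calc c * y ≤ c * sSup X := mul_mono c y _ hy.2
      _ = ⨆ b ∈ X, c * b := hdist c X
      _ = sSup ((fun y => c * y) '' X) := sSup_image.symm
end

section
/- Let L be a multiplicative lattice and H a wire of L, with X_r = {h ∈ H | h ≤ sSup X} for X ⊆ H. Then the maps f(X) = sSup X (from the set of r-ideals to L) and g(y) = {h ∈ H | h ≤ y} (from L to the set of r-ideals) are mutually inverse bijections, f is monotone from inclusion to ≤, and g is monotone from ≤ to inclusion; in particular the poset of r-ideals of H ordered by inclusion is order-isomorphic to L. -/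
/-- `gMap H y = {h ∈ H | h ≤ y}`. -/
def gMap {L : Type*} [CompleteLattice L] (H : Set L) (y : L) : Set L :=
  {h | h ∈ H ∧ h ≤ y}

/-- for a wire `H` of a multiplicative lattice `L`, the maps
`f(X) = sSup X` and `g(y) = {h ∈ H | h ≤ y}` are mutually inverse monotone
bijections between the `r`-ideals of `H` and `L`; in particular the poset of
`r`-ideals ordered by inclusion is order-isomorphic to `L`. -/
theorem stmt_1 {L : Type*} [CompleteLattice L] [CommMonoid L]
    (hdist : ∀ (a : L) (S : Set L), a * sSup S = ⨆ b ∈ S, a * b)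
    (hone : (1 : L) = ⊤)
    (H : Set L) (hH1 : (1 : L) ∈ H) (hHbot : (⊥ : L) ∈ H)
    (hHmul : ∀ x ∈ H, ∀ y ∈ H, x * y ∈ H)
    (hgen : ∀ a : L, a = sSup {h | h ∈ H ∧ h ≤ a}) :
    (∀ y : L, ∃ X : Set L, X ⊆ H ∧ gMap H y = rMap H X) ∧
    (∀ X : Set L, X ⊆ H → gMap H (sSup (rMap H X)) = rMap H X) ∧
    (∀ y : L, sSup (gMap H y) = y) ∧
    (∀ A B : Set L, A ⊆ B → sSup A ≤ sSup B) ∧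
    (∀ x y : L, x ≤ y → gMap H x ⊆ gMap H y) ∧
    Nonempty ({A : Set L // ∃ X : Set L, X ⊆ H ∧ A = rMap H X} ≃o L) := by
  have hg : ∀ y : L, sSup (gMap H y) = y := fun y => (hgen y).symm
  have hr : ∀ X : Set L, gMap H (sSup (rMap H X)) = rMap H X :=
    fun X => congrArg (gMap H) (hg (sSup X))
  have hex : ∀ y : L, ∃ X : Set L, X ⊆ H ∧ gMap H y = rMap H X :=
    fun y => ⟨gMap H y, fun _ h => h.1, congrArg (gMap H) (hg y).symm⟩
  have hmono : ∀ x y : L, x ≤ y → gMap H x ⊆ gMap H y :=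
    fun _ _ hxy _ h => ⟨h.1, h.2.trans hxy⟩
  refine ⟨hex, fun X _ => hr X, hg, fun _ _ => sSup_le_sSup, hmono, ⟨?_⟩⟩
  have hinv : ∀ A : {A : Set L // ∃ X : Set L, X ⊆ H ∧ A = rMap H X},
      gMap H (sSup A.1) = A.1 := by
    rintro ⟨_, X, -, rfl⟩
    exact hr X
  exact
    { toFun := fun A => sSup A.1
      invFun := fun y => ⟨gMap H y, hex y⟩
      left_inv := fun A => Subtype.ext (hinv A)
      right_inv := hg
      map_rel_iff' := fun {A B} =>
        ⟨fun h => by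
          have h' := hmono _ _ h
          rwa [Equiv.coe_fn_mk, hinv A, hinv B] at h', fun h => sSup_le_sSup h⟩ }
end

section
/- Let L be a multiplicative lattice and H a wire of L, with X_r = {h ∈ H | h ≤ sSup X} for X ⊆ H. Then for all X, Y ⊆ H one has sSup ((X*Y)_r) = (sSup X) * (sSup Y), where X*Y = {x*y | x ∈ X, y ∈ Y}; in particular the order isomorphism X ↦ sSup X from r-ideals to L is multiplicative with respect to the product (X, Y) ↦ (X*Y)_r on r-ideals. -/
/-- for a wire `H` of a multiplicative lattice `L` and `X, Y ⊆ H`,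
`sSup ((X*Y)_r) = (sSup X) * (sSup Y)`; so `X ↦ sSup X` is multiplicative with
respect to the product `(X, Y) ↦ (X*Y)_r` on `r`-ideals. -/
theorem stmt_2 {L : Type*} [CompleteLattice L] [CommMonoid L]
    (hdist : ∀ (a : L) (S : Set L), a * sSup S = ⨆ b ∈ S, a * b)
    (hone : (1 : L) = ⊤)
    (H : Set L) (hH1 : (1 : L) ∈ H) (hHbot : (⊥ : L) ∈ H)
    (hHmul : ∀ x ∈ H, ∀ y ∈ H, x * y ∈ H)
    (hgen : ∀ a : L, a = sSup {h | h ∈ H ∧ h ≤ a}) :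
    ∀ X : Set L, X ⊆ H → ∀ Y : Set L, Y ⊆ H →
      sSup (rMap H (Set.image2 (· * ·) X Y)) = sSup X * sSup Y := by
  intro X _ Y _
  rw [rMap, ← hgen, sSup_image2, mul_comm, hdist]
  refine iSup_congr fun x => iSup_congr fun _ => ?_
  rw [mul_comm, hdist]
end

section
/- Let L be a multiplicative lattice and H an M-wire of L, with X_r = {h ∈ H | h ≤ sSup X} for X ⊆ H. Then r is an ideal system: for every c ∈ H and every X ⊆ H one has (c*X)_r = c*X_r, where c*X = {c*x | x ∈ X}. -/
/-- if `H` is an M-wire of a multiplicative lattice `L`, then `r`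
is an ideal system: `(c*X)_r = c*X_r` for every `c ∈ H` and `X ⊆ H`. -/
theorem stmt_3 {L : Type*} [CompleteLattice L] [CommMonoid L]
    (hdist : ∀ (a : L) (S : Set L), a * sSup S = ⨆ b ∈ S, a * b)
    (hone : (1 : L) = ⊤)
    (H : Set L) (hH1 : (1 : L) ∈ H) (hHbot : (⊥ : L) ∈ H)
    (hHmul : ∀ x ∈ H, ∀ y ∈ H, x * y ∈ H)
    (hgen : ∀ a : L, a = sSup {h | h ∈ H ∧ h ≤ a})
    (hM : ∀ s ∈ H, ∀ t ∈ H, ∀ a : L, s ≤ t * a → ∃ u ∈ H, u ≤ a ∧ s = t * u) :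
    ∀ c ∈ H, ∀ X : Set L, X ⊆ H →
      rMap H ((fun y => c * y) '' X) = (fun y => c * y) '' rMap H X := by
  intro c hc X _
  have hmono : ∀ x y : L, x ≤ y → c * x ≤ c * y := by
    intro x y hxy
    have h := hdist c {x, y}
    rw [sSup_pair, sup_eq_right.mpr hxy, iSup_pair] at h
    exact h ▸ le_sup_left
  have hsup : sSup ((fun y => c * y) '' X) = c * sSup X := by
    rw [sSup_image, hdist]
  ext s
  simp only [rMap, hsup, Set.mem_ofPred_eq, Set.mem_image]
  constructor
  · rintro ⟨hs, hle⟩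
    obtain ⟨u, hu, hua, rfl⟩ := hM s hs c hc _ hle
    exact ⟨u, ⟨hu, hua⟩, rfl⟩
  · rintro ⟨u, ⟨hu, hua⟩, rfl⟩
    exact ⟨hHmul c hc u hu, hmono u _ hua⟩
end

section
/- Let L be a multiplicative lattice and H a wire of L, with X_r = {h ∈ H | h ≤ sSup X} for X ⊆ H. If (c*X)_r ⊆ c*X_r for every c ∈ H and every X ⊆ H (so that r is an ideal system), then H satisfies condition (M): whenever s, t ∈ H, a ∈ L and s ≤ t*a, there exists u ∈ H with u ≤ a and s = t*u. -/
/-- if `H` is a wire of a multiplicative lattice `L` such that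
`(c*X)_r ⊆ c*X_r` for all `c ∈ H`, `X ⊆ H` (so `r` is an ideal system), then
`H` satisfies condition (M). -/
theorem stmt_4 {L : Type*} [CompleteLattice L] [CommMonoid L]
    (hdist : ∀ (a : L) (S : Set L), a * sSup S = ⨆ b ∈ S, a * b)
    (hone : (1 : L) = ⊤)
    (H : Set L) (hH1 : (1 : L) ∈ H) (hHbot : (⊥ : L) ∈ H)
    (hHmul : ∀ x ∈ H, ∀ y ∈ H, x * y ∈ H)
    (hgen : ∀ a : L, a = sSup {h | h ∈ H ∧ h ≤ a})
    (hsys : ∀ c ∈ H, ∀ X : Set L, X ⊆ H →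
      rMap H ((fun y => c * y) '' X) ⊆ (fun y => c * y) '' rMap H X) :
    ∀ s ∈ H, ∀ t ∈ H, ∀ a : L, s ≤ t * a → ∃ u ∈ H, u ≤ a ∧ s = t * u := by
  intro s hs t ht a hsa
  obtain ⟨u, ⟨huH, hua⟩, hu⟩ := hsys t ht {h | h ∈ H ∧ h ≤ a} (fun _ h => h.1)
    ⟨hs, by rwa [sSup_image, ← hdist, ← hgen a]⟩
  exact ⟨u, huH, by rwa [← hgen a] at hua, hu.symm⟩
end

section
/- Every multiplicative lattice L can be lifted to a weak ideal system: the map r : Set L → Set L defined by X_r = {y ∈ L | y ≤ sSup X} satisfies axioms (s1)–(s4) of a weak ideal system on the monoid L itself, its r-ideals are exactly the intervals {y | y ≤ a} for a ∈ L, and the map X ↦ sSup X is a monotone bijection from the r-ideals (ordered by inclusion) onto L with monotone inverse a ↦ {y | y ≤ a}. -/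
/-- Multiplication that distributes over arbitrary suprema is monotone. -/
theorem mul_le_mul_left_of_mul_sSup {L : Type*} [CompleteLattice L] [Mul L]
    (hdist : ∀ (a : L) (S : Set L), a * sSup S = ⨆ b ∈ S, a * b)
    (a : L) {b c : L} (h : b ≤ c) : a * b ≤ a * c := by
  have hc : a * c = ⨆ x ∈ ({b, c} : Set L), a * x := by
    rw [← hdist, sSup_pair, sup_eq_right.mpr h]
  rw [hc]
  exact le_biSup (fun x => a * x) (Set.mem_insert b {c})

/-- An element of a complete lattice is the supremum of the elements below it. -/
theorem sSup_setOf_le {L : Type*} [CompleteLattice L] (a : L) : sSup {y : L | y ≤ a} = a :=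
  isLUB_Iic.sSup_eq

/-- every multiplicative lattice `L` can be lifted to a weak ideal
system: `X ↦ X_r = {y | y ≤ sSup X}` satisfies (s1)–(s4) on the monoid `L`
itself, the `r`-ideals are exactly the intervals `{y | y ≤ a}`, and
`X ↦ sSup X` is a monotone bijection from the `r`-ideals onto `L` with
monotone inverse `a ↦ {y | y ≤ a}`. -/
theorem stmt_7 {L : Type*} [CompleteLattice L] [CommMonoid L]
    (hdist : ∀ (a : L) (S : Set L), a * sSup S = ⨆ b ∈ S, a * b)
    (hone : (1 : L) = ⊤) :
    (∀ X : Set L, ∀ x ∈ X, ∀ h : L, x * h ∈ {y : L | y ≤ sSup X}) ∧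
    (∀ X Y : Set L, X ⊆ Y → {y : L | y ≤ sSup X} ⊆ {y : L | y ≤ sSup Y}) ∧
    (∀ X : Set L, {y : L | y ≤ sSup {z : L | z ≤ sSup X}} = {y : L | y ≤ sSup X}) ∧
    (∀ (c : L) (X : Set L),
      (fun y => c * y) '' {y : L | y ≤ sSup X} ⊆
        {y : L | y ≤ sSup ((fun y => c * y) '' X)}) ∧
    (∀ X : Set L, ∃ a : L, {y : L | y ≤ sSup X} = {y : L | y ≤ a}) ∧
    (∀ a : L, ∃ X : Set L, {y : L | y ≤ a} = {y : L | y ≤ sSup X}) ∧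
    (∀ a : L, sSup {y : L | y ≤ a} = a) ∧
    (∀ X : Set L, {y : L | y ≤ sSup {z : L | z ≤ sSup X}} = {y : L | y ≤ sSup X}) ∧
    (∀ A B : Set L, A ⊆ B → sSup A ≤ sSup B) ∧
    (∀ a b : L, a ≤ b → {y : L | y ≤ a} ⊆ {y : L | y ≤ b}) := by
  have hmono := fun a {b c : L} => mul_le_mul_left_of_mul_sSup hdist a (b := b) (c := c)
  refine ⟨fun X x hx h => ?_, fun X Y hXY y hy => le_trans hy (sSup_le_sSup hXY),
    fun X => by rw [sSup_setOf_le], ?_, fun X => ⟨sSup X, rfl⟩,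
    fun a => ⟨{y | y ≤ a}, by rw [sSup_setOf_le]⟩, sSup_setOf_le,
    fun X => by rw [sSup_setOf_le], fun A B => sSup_le_sSup, fun a b hab y hy => le_trans hy hab⟩
  · calc x * h ≤ x * 1 := hmono x (hone ▸ le_top)
      _ = x := mul_one x
      _ ≤ sSup X := le_sSup hx
  · rintro c X _ ⟨y, hy, rfl⟩
    calc c * y ≤ c * sSup X := hmono c hy
      _ = sSup ((fun y => c * y) '' X) := by rw [hdist, sSup_image]
end

section
/- Let K be a number field with [K : ℚ] = 2 and ring of integers 𝓞 K, and let N(a) = |Norm_ℤ(a)| ∈ ℕ denote the absolute norm. Let S be the multiplicative submonoid of ℕ generated by the image of N together with the set of inert prime numbers (primes p such that the ideal p·𝓞 K is prime). Then S generates ℕ as a lattice under gcd; in particular, for every prime number p there exist s, t ∈ S with gcd(s, t) = p. -/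
open NumberField

/-- If every prime is a gcd of two elements of a submonoid `S` of `ℕ`, then every nonzero `n` is
the gcd of its multiples in `S`, also after scaling by a constant `c`. -/
theorem Submonoid.dvd_mul_of_forall_dvd_mul {S : Submonoid ℕ}
    (h : ∀ p : ℕ, p.Prime → ∃ s ∈ S, ∃ t ∈ S, Nat.gcd s t = p) {n : ℕ} (hn : n ≠ 0) :
    ∀ c e : ℕ, (∀ u ∈ S, n ∣ u → e ∣ c * u) → e ∣ c * n := by
  induction n using Nat.recOnMul with
  | zero => exact absurd rfl hn
  | one => exact fun c e H => H 1 S.one_mem dvd_rfl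
  | prime p hp =>
    intro c e H
    obtain ⟨s, hs, t, ht, rfl⟩ := h p hp
    rw [← Nat.gcd_mul_left]
    exact Nat.dvd_gcd (H s hs (Nat.gcd_dvd_left s t)) (H t ht (Nat.gcd_dvd_right s t))
  | mul a b iha ihb =>
    intro c e H
    rw [← mul_assoc]
    refine ihb (right_ne_zero_of_mul hn) (c * a) e fun v hv hbv => ?_
    rw [mul_right_comm]
    refine iha (left_ne_zero_of_mul hn) (c * v) e fun u hu hau => ?_
    rw [mul_assoc, mul_comm v u]
    exact H _ (S.mul_mem hu hv) (mul_dvd_mul hau hbv)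

section DedekindDomain

variable {R : Type*} [CommRing R] [IsDedekindDomain R] [Module.Free ℤ R] [Module.Finite ℤ R]

/-- The absolute norm of an ideal coprime to a prime number `p` is not divisible by `p`. -/
theorem Ideal.not_dvd_absNorm_of_isCoprime_span {p : ℕ} (hp : p.Prime) {J : Ideal R}
    (hJ : IsCoprime (Ideal.span {(p : R)}) J) : ¬ p ∣ J.absNorm := by
  intro hdvd
  obtain ⟨Q, hQ, hQp, hQJ⟩ := Ideal.exists_isMaximal_dvd_of_dvd_absNorm' hp J hdvd
  have hpQ : (p : R) ∈ Q := by
    have : (p : ℤ) ∈ Q.under ℤ := hQp ▸ Ideal.mem_span_singleton_self _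
    simpa [Ideal.mem_comap] using this
  refine hQ.ne_top (top_le_iff.mp ?_)
  rw [← Ideal.isCoprime_iff_sup_eq.mp hJ]
  exact sup_le ((Ideal.span_singleton_le_iff_mem _).mpr hpQ) (Ideal.dvd_iff_le.mp hQJ)

/-- A nonzero ideal `I` contains an element whose norm is `absNorm I` times an integer
prime to `p`. -/
theorem Ideal.exists_natAbs_norm_eq_absNorm_mul [CharZero R] {p : ℕ} (hp : p.Prime) {I : Ideal R}
    (hI : I ≠ ⊥) : ∃ (a : R) (m : ℕ), (Algebra.norm ℤ a).natAbs = I.absNorm * m ∧ ¬ p ∣ m := by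
  have hp0 : Ideal.span {(p : R)} ≠ ⊥ := by
    simpa [Ideal.span_singleton_eq_bot] using hp.ne_zero
  obtain ⟨a, ha⟩ := IsDedekindDomain.exists_sup_span_eq
    (Ideal.mul_le_left : I * Ideal.span {(p : R)} ≤ I) (mul_ne_zero hI hp0)
  obtain ⟨J, hJ⟩ : I ∣ Ideal.span {a} := Ideal.dvd_iff_le.mpr (ha ▸ le_sup_right)
  refine ⟨a, J.absNorm, ?_, Ideal.not_dvd_absNorm_of_isCoprime_span hp ?_⟩
  · rw [← Ideal.absNorm_span_singleton, hJ, map_mul]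
  · rw [hJ, ← Ideal.mul_sup] at ha
    rw [Ideal.isCoprime_iff_sup_eq, ← Ideal.one_eq_top]
    exact mul_left_cancel₀ hI (ha.trans (mul_one I).symm)

/-- In rank two, a prime number that is not inert is the norm of an ideal. -/
theorem Ideal.exists_absNorm_eq_of_not_isPrime_span (hrank : Module.finrank ℤ R = 2) {p : ℕ}
    (hp : p.Prime) (hinert : ¬ (Ideal.span {(p : R)}).IsPrime) :
    ∃ P : Ideal R, P.absNorm = p := by
  have hnorm : (Ideal.span {(p : R)}).absNorm = p ^ 2 := by
    rw [Ideal.absNorm_span_natCast, hrank]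
  have htop : Ideal.span {(p : R)} ≠ ⊤ := fun h => by
    rw [h, Ideal.absNorm_top] at hnorm
    exact hp.one_lt.ne' (by simpa using hnorm.symm)
  obtain ⟨P, hP, hle⟩ := Ideal.exists_le_maximal _ htop
  obtain ⟨J, hJ⟩ := Ideal.dvd_iff_le.mpr hle
  have hmul : P.absNorm * J.absNorm = p ^ 2 := by rw [← map_mul, ← hJ, hnorm]
  have hJ1 : J.absNorm ≠ 1 := fun h => by
    rw [Ideal.absNorm_eq_one_iff] at h
    rw [hJ, h, Ideal.mul_top] at hinert
    exact hinert hP.isPrime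
  have hP1 : P.absNorm ≠ 1 := by simpa using hP.ne_top
  exact ⟨P, ((Nat.Prime.mul_eq_prime_sq_iff hp hP1 hJ1).mp hmul).1⟩

end DedekindDomain

/-- let `K` be a quadratic number field with ring of integers
`𝓞 K` and absolute norm `N`, and let `S` be the submonoid of `ℕ` generated by
the image of `N` together with the inert primes. Then `S` generates `ℕ` as a
lattice under gcd (every `n` is the gcd of a subset of `S`); in particular, for
every prime `p` there are `s, t ∈ S` with `gcd s t = p`. -/
theorem stmt_10 (K : Type*) [Field K] [NumberField K]
    (hdeg : Module.finrank ℚ K = 2)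
    (S : Submonoid ℕ)
    (hS : S = Submonoid.closure
      (Set.range (fun a : 𝓞 K => (Algebra.norm ℤ a).natAbs) ∪
        {p : ℕ | p.Prime ∧ (Ideal.span {(p : 𝓞 K)}).IsPrime})) :
    (∀ n : ℕ, ∃ T : Set ℕ, T ⊆ (S : Set ℕ) ∧ (∀ t ∈ T, n ∣ t) ∧
      (∀ e : ℕ, (∀ t ∈ T, e ∣ t) → e ∣ n)) ∧
    (∀ p : ℕ, p.Prime → ∃ s ∈ S, ∃ t ∈ S, Nat.gcd s t = p) := by
  have hnorm : ∀ a : 𝓞 K, (Algebra.norm ℤ a).natAbs ∈ S := fun a =>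
    hS ▸ Submonoid.subset_closure (Or.inl ⟨a, rfl⟩)
  have hrank : Module.finrank ℤ (𝓞 K) = 2 := (RingOfIntegers.rank K).trans hdeg
  have hprime : ∀ p : ℕ, p.Prime → ∃ s ∈ S, ∃ t ∈ S, Nat.gcd s t = p := by
    intro p hp
    by_cases hinert : (Ideal.span {(p : 𝓞 K)}).IsPrime
    · have hpS : p ∈ S := hS ▸ Submonoid.subset_closure (Or.inr ⟨hp, hinert⟩)
      exact ⟨p, hpS, p, hpS, Nat.gcd_self p⟩
    · obtain ⟨P, hP⟩ := Ideal.exists_absNorm_eq_of_not_isPrime_span hrank hp hinert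
      have hP0 : P ≠ ⊥ := fun h => hp.ne_zero (by rw [← hP, h, Ideal.absNorm_bot])
      obtain ⟨a, m, ham, hm⟩ := Ideal.exists_natAbs_norm_eq_absNorm_mul hp hP0
      refine ⟨_, hnorm a, _, hnorm (p : 𝓞 K), ?_⟩
      rw [ham, hP, ← Ideal.absNorm_span_singleton, Ideal.absNorm_span_natCast, hrank, sq,
        Nat.gcd_mul_left, Nat.Coprime.gcd_eq_one ((hp.coprime_iff_not_dvd.mpr hm).symm), mul_one]
  refine ⟨fun n => ⟨{t | t ∈ S ∧ n ∣ t}, fun t ht => ht.1, fun t ht => ht.2, fun e he => ?_⟩,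
    hprime⟩
  rcases eq_or_ne n 0 with rfl | hn
  · exact dvd_zero e
  · simpa using Submonoid.dvd_mul_of_forall_dvd_mul hprime hn 1 e
      fun u hu hnu => by simpa using he u ⟨hu, hnu⟩
end

section
/- Let K be a number field with [K : ℚ] = 2 and ring of integers 𝓞 K, with absolute norm N(a) = |Norm_ℤ(a)| ∈ ℕ, and assume 𝓞 K is nonfactorial (the class group ClassGroup (𝓞 K) is nontrivial). If every element g of ClassGroup (𝓞 K) satisfies g² = 1, then the image of N is closed under division: for all nonzero a, b ∈ 𝓞 K with N(a) ∣ N(b), there exists c ∈ 𝓞 K with N(a) * N(c) = N(b). -/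
open NumberField

namespace QuadraticNorm

variable {K : Type*} [Field K] [NumberField K]

/-- If the class group has exponent dividing two, then the square of every ideal is principal. -/
theorem exists_mul_self_eq_span (hG : ∀ g : ClassGroup (𝓞 K), g ^ 2 = 1) (I : Ideal (𝓞 K)) :
    ∃ x : 𝓞 K, I * I = Ideal.span {x} := by
  by_cases hI : I = ⊥
  · exact ⟨0, by simp [hI]⟩
  · have hmem : I ∈ nonZeroDivisors (Ideal (𝓞 K)) := mem_nonZeroDivisors_of_ne_zero hI
    have h := hG (ClassGroup.mk0 ⟨I, hmem⟩)
    rw [sq, ← map_mul] at h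
    exact ((ClassGroup.mk0_eq_one_iff (mul_mem hmem hmem)).mp h).principal

theorem exists_prime_natCast_mem {P : Ideal (𝓞 K)} (hP : Prime P) :
    ∃ p : ℕ, p.Prime ∧ (p : 𝓞 K) ∈ P := by
  have hprime : P.IsPrime := Ideal.isPrime_of_prime hP
  have hne : Ideal.absNorm P ≠ 0 := fun h => hP.ne_zero (Ideal.absNorm_eq_zero_iff.mp h)
  have hmem := Ideal.absNorm_mem P
  rw [← Nat.prod_primeFactorsList hne, Nat.cast_list_prod, ← Multiset.prod_coe] at hmem
  obtain ⟨x, hx, hxP⟩ := hprime.multiset_prod_mem_iff_exists_mem _ |>.mp hmem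
  obtain ⟨p, hp, rfl⟩ := List.mem_map.mp (Multiset.mem_coe.mp hx)
  exact ⟨p, Nat.prime_of_mem_primeFactorsList hp, hxP⟩

theorem absNorm_span_natCast_eq_sq (hdeg : Module.finrank ℚ K = 2) (p : ℕ) :
    Ideal.absNorm (Ideal.span {(p : 𝓞 K)}) = p ^ 2 := by
  rw [Ideal.absNorm_span_natCast, RingOfIntegers.rank, hdeg]

theorem absNorm_dvd_sq (hdeg : Module.finrank ℚ K = 2) {P : Ideal (𝓞 K)} {p : ℕ}
    (hmem : (p : 𝓞 K) ∈ P) : Ideal.absNorm P ∣ p ^ 2 := by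
  rw [← absNorm_span_natCast_eq_sq hdeg p]
  exact Ideal.absNorm_dvd_absNorm_of_le ((Ideal.span_singleton_le_iff_mem P).mpr hmem)

theorem dvd_absNorm (hdeg : Module.finrank ℚ K = 2) {P : Ideal (𝓞 K)} (hP : Prime P) {p : ℕ}
    (hp : p.Prime) (hmem : (p : 𝓞 K) ∈ P) : p ∣ Ideal.absNorm P := by
  obtain ⟨k, -, hk⟩ := (Nat.dvd_prime_pow hp).mp (absNorm_dvd_sq hdeg hmem)
  rw [hk]
  refine dvd_pow_self p ?_
  rintro rfl
  exact hP.not_isUnit (Ideal.isUnit_iff.mpr (Ideal.absNorm_eq_one_iff.mp (by simpa using hk)))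

/-- A rational prime dividing the norm of an ideal lies below one of its prime factors. -/
theorem exists_prime_dvd_of_dvd_absNorm (hdeg : Module.finrank ℚ K = 2) {p : ℕ} (hp : p.Prime)
    {J : Ideal (𝓞 K)} (hJ : J ≠ 0) (hdvd : p ∣ Ideal.absNorm J) :
    ∃ Q : Ideal (𝓞 K), Prime Q ∧ Q ∣ J ∧ (p : 𝓞 K) ∈ Q := by
  induction J using UniqueFactorizationMonoid.induction_on_prime with
  | h₁ => exact absurd rfl hJ
  | h₂ J hunit =>
    rw [Ideal.absNorm_eq_one_iff.mpr (Ideal.isUnit_iff.mp hunit)] at hdvd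
    exact absurd hdvd hp.not_dvd_one
  | h₃ J Q hJ' hQ ih =>
    rw [map_mul] at hdvd
    rcases hp.dvd_mul.mp hdvd with h | h
    · obtain ⟨q, hq, hmem⟩ := exists_prime_natCast_mem hQ
      have hpq : p ∣ q := hp.dvd_of_dvd_pow (h.trans (absNorm_dvd_sq hdeg hmem))
      rw [← (Nat.prime_dvd_prime_iff_eq hp hq).mp hpq] at hmem
      exact ⟨Q, hQ, dvd_mul_right Q J, hmem⟩
    · obtain ⟨R, hR, hRJ, hmem⟩ := ih hJ' h
      exact ⟨R, hR, hRJ.mul_left Q, hmem⟩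

/-- Distinct primes of a quadratic field above the same rational prime `p` have product `(p)`. -/
theorem mul_eq_span_of_ne (hdeg : Module.finrank ℚ K = 2) {P Q : Ideal (𝓞 K)} (hP : Prime P)
    (hQ : Prime Q) {p : ℕ} (hp : p.Prime) (hpP : (p : 𝓞 K) ∈ P) (hpQ : (p : 𝓞 K) ∈ Q)
    (hne : P ≠ Q) : P * Q = Ideal.span {(p : 𝓞 K)} := by
  have hndvd : ¬ P ∣ Q := fun h => hne (associated_iff_eq.mp (hP.associated_of_dvd hQ h))
  obtain ⟨R, hR⟩ := Ideal.dvd_span_singleton.mpr hpQ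
  have hPR : P ∣ R :=
    (hP.dvd_or_dvd (hR ▸ Ideal.dvd_span_singleton.mpr hpP)).resolve_left hndvd
  obtain ⟨S, rfl⟩ := hPR
  have hnorm := congrArg Ideal.absNorm hR
  rw [absNorm_span_natCast_eq_sq hdeg, map_mul, map_mul] at hnorm
  obtain ⟨m, hm⟩ := dvd_absNorm hdeg hP hp hpP
  obtain ⟨n, hn⟩ := dvd_absNorm hdeg hQ hp hpQ
  have hS : Ideal.absNorm S = 1 := by
    have h : p ^ 2 * (n * m * Ideal.absNorm S) = p ^ 2 * 1 := by
      rw [mul_one]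
      conv_rhs => rw [hnorm, hm, hn]
      ring
    exact Nat.eq_one_of_mul_eq_one_left (Nat.eq_of_mul_eq_mul_left (pow_pos hp.pos 2) h)
  rw [hR, Ideal.absNorm_eq_one_iff.mp hS, Ideal.mul_top, mul_comm]

theorem absNorm_eq_of_ne (hdeg : Module.finrank ℚ K = 2) {P Q : Ideal (𝓞 K)} (hP : Prime P)
    (hQ : Prime Q) {p : ℕ} (hp : p.Prime) (hpP : (p : 𝓞 K) ∈ P) (hpQ : (p : 𝓞 K) ∈ Q)
    (hne : P ≠ Q) : Ideal.absNorm P = Ideal.absNorm Q := by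
  have hnorm := congrArg Ideal.absNorm (mul_eq_span_of_ne hdeg hP hQ hp hpP hpQ hne)
  rw [map_mul, absNorm_span_natCast_eq_sq hdeg] at hnorm
  obtain ⟨m, hm⟩ := dvd_absNorm hdeg hP hp hpP
  obtain ⟨n, hn⟩ := dvd_absNorm hdeg hQ hp hpQ
  have h : p ^ 2 * (m * n) = p ^ 2 * 1 := by
    rw [mul_one]
    conv_rhs => rw [← hnorm, hm, hn]
    ring
  have hmn := Nat.eq_of_mul_eq_mul_left (pow_pos hp.pos 2) h
  rw [hm, hn, Nat.eq_one_of_mul_eq_one_right hmn, Nat.eq_one_of_mul_eq_one_left hmn]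

/-- When the class group has exponent dividing two, a quotient of ideal norms is the norm of an
ideal whose class is the quotient of the classes. -/
theorem exists_absNorm_mul_eq (hdeg : Module.finrank ℚ K = 2)
    (hG : ∀ g : ClassGroup (𝓞 K), g ^ 2 = 1) {I J : Ideal (𝓞 K)} (hI : I ≠ 0) (hJ : J ≠ 0)
    (hdvd : Ideal.absNorm I ∣ Ideal.absNorm J) :
    ∃ L : Ideal (𝓞 K), Ideal.absNorm I * Ideal.absNorm L = Ideal.absNorm J ∧
      ∃ x : 𝓞 K, L * I * J = Ideal.span {x} := by
  induction I using UniqueFactorizationMonoid.induction_on_prime generalizing J with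
  | h₁ => exact absurd rfl hI
  | h₂ I hunit =>
    obtain rfl := Ideal.isUnit_iff.mp hunit
    exact ⟨J, by simp, by simpa using exists_mul_self_eq_span hG J⟩
  | h₃ I P hI' hP ih =>
    obtain ⟨p, hp, hpP⟩ := exists_prime_natCast_mem hP
    rw [map_mul] at hdvd
    obtain ⟨Q, hQ, ⟨J, rfl⟩, hpQ⟩ := exists_prime_dvd_of_dvd_absNorm hdeg hp hJ
      ((dvd_absNorm hdeg hP hp hpP).trans (dvd_of_mul_right_dvd hdvd))
    have hPQ : Ideal.absNorm P = Ideal.absNorm Q ∧ ∃ y : 𝓞 K, P * Q = Ideal.span {y} := by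
      by_cases h : P = Q
      · subst h
        exact ⟨rfl, exists_mul_self_eq_span hG P⟩
      · exact ⟨absNorm_eq_of_ne hdeg hP hQ hp hpP hpQ h,
          p, mul_eq_span_of_ne hdeg hP hQ hp hpP hpQ h⟩
    obtain ⟨hnorm, y, hy⟩ := hPQ
    have hpos : 0 < Ideal.absNorm Q :=
      Nat.pos_of_ne_zero fun h => hQ.ne_zero (Ideal.absNorm_eq_zero_iff.mp h)
    rw [map_mul, hnorm] at hdvd
    obtain ⟨L, hL, x, hx⟩ := ih hI' (right_ne_zero_of_mul hJ)
      (Nat.dvd_of_mul_dvd_mul_left hpos hdvd)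
    refine ⟨L, by rw [map_mul, map_mul, hnorm, mul_assoc, hL], x * y, ?_⟩
    rw [← Ideal.span_singleton_mul_span_singleton, ← hx, ← hy]
    ring

theorem exists_absNorm_span_mul_eq (hdeg : Module.finrank ℚ K = 2)
    (hG : ∀ g : ClassGroup (𝓞 K), g ^ 2 = 1) {a b : 𝓞 K} (ha : a ≠ 0) (hb : b ≠ 0)
    (hdvd : Ideal.absNorm (Ideal.span {a}) ∣ Ideal.absNorm (Ideal.span {b})) :
    ∃ c : 𝓞 K, Ideal.absNorm (Ideal.span {a}) * Ideal.absNorm (Ideal.span {c}) =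
      Ideal.absNorm (Ideal.span {b}) := by
  have hspan {r : 𝓞 K} (hr : r ≠ 0) : Ideal.span {r} ≠ 0 := by
    rwa [Ne, Ideal.zero_eq_bot, Ideal.span_singleton_eq_bot]
  obtain ⟨L, hL, x, hx⟩ := exists_absNorm_mul_eq hdeg hG (hspan ha) (hspan hb) hdvd
  rw [mul_assoc, Ideal.span_singleton_mul_span_singleton] at hx
  have hmem : x ∈ L * Ideal.span {a * b} := by
    rw [hx]
    exact Ideal.mem_span_singleton_self x
  obtain ⟨c, -, hc⟩ := Ideal.mem_mul_span_singleton.mp hmem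
  rw [← hc, ← Ideal.span_singleton_mul_span_singleton c] at hx
  have hLc : L = Ideal.span {c} := mul_right_cancel₀ (hspan (mul_ne_zero ha hb)) hx
  exact ⟨c, hLc ▸ hL⟩

end QuadraticNorm

/-- let `K` be a quadratic number field whose ring of integers is
nonfactorial. If every element of the class group squares to the identity, then
the image of the absolute norm `N` is closed under division. -/
theorem stmt_11 (K : Type*) [Field K] [NumberField K]
    (hdeg : Module.finrank ℚ K = 2)
    (hnf : Nontrivial (ClassGroup (𝓞 K)))
    (hG : ∀ g : ClassGroup (𝓞 K), g ^ 2 = 1) :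
    ∀ a b : 𝓞 K, a ≠ 0 → b ≠ 0 →
      (Algebra.norm ℤ a).natAbs ∣ (Algebra.norm ℤ b).natAbs →
      ∃ c : 𝓞 K,
        (Algebra.norm ℤ a).natAbs * (Algebra.norm ℤ c).natAbs =
          (Algebra.norm ℤ b).natAbs := by
  intro a b ha hb hdvd
  rw [← Ideal.absNorm_span_singleton, ← Ideal.absNorm_span_singleton] at hdvd
  obtain ⟨c, hc⟩ := QuadraticNorm.exists_absNorm_span_mul_eq hdeg hG ha hb hdvd
  refine ⟨c, ?_⟩
  rw [← Ideal.absNorm_span_singleton, ← Ideal.absNorm_span_singleton,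
    ← Ideal.absNorm_span_singleton]
  exact hc
end

section
/- Let K be a number field with [K : ℚ] = 2 and ring of integers 𝓞 K, with absolute norm N(a) = |Norm_ℤ(a)| ∈ ℕ, and assume 𝓞 K is nonfactorial (the class group ClassGroup (𝓞 K) is nontrivial). If the image of N is closed under division (for all nonzero a, b ∈ 𝓞 K with N(a) ∣ N(b) there exists c ∈ 𝓞 K with N(a) * N(c) = N(b)), then every element g of ClassGroup (𝓞 K) satisfies g² = 1; equivalently, ClassGroup (𝓞 K) is a finite product of copies of ℤ/2ℤ. -/
open NumberField

section EulerProduct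

variable {M : Type*} [CommMonoidWithZero M] [UniqueFactorizationMonoid M]
  [Subsingleton Mˣ]

lemma tsum_indicator_not_dvd_insert (f : M →*₀ ℂ) (hf : Summable fun a => ‖f a‖)
    (S : Finset {p : M // Prime p}) (q : {p : M // Prime p}) (hq : q ∉ S) :
    ∑' a, {a : M | ∀ p ∈ insert q (S : Set {p : M // Prime p}), ¬ p.1 ∣ a}.indicator f a =
      (1 - f q.1) * ∑' a, {a : M | ∀ p ∈ S, ¬ p.1 ∣ a}.indicator f a := by
  set E : Set M := {a : M | ∀ p ∈ S, ¬ p.1 ∣ a} with hE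
  have hf' : Summable f := hf.of_norm
  have hinj : Function.Injective fun a : M => q.1 * a := mul_right_injective₀ q.2.ne_zero
  have hsplit : ∀ a, {a : M | ∀ p ∈ insert q (S : Set {p : M // Prime p}), ¬ p.1 ∣ a}.indicator f a
      = E.indicator f a - (E ∩ {a | q.1 ∣ a}).indicator f a := by
    intro a
    have hmem : (a ∈ {a : M | ∀ p ∈ insert q (S : Set {p : M // Prime p}), ¬ p.1 ∣ a}) ↔
        a ∈ E ∧ ¬ q.1 ∣ a := by
      rw [Set.mem_ofPred_eq, Set.forall_mem_insert, and_comm]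
      rfl
    have hmem' : a ∈ E ∩ {a | q.1 ∣ a} ↔ a ∈ E ∧ q.1 ∣ a := Iff.rfl
    classical
    rw [Set.indicator_apply, Set.indicator_apply, Set.indicator_apply, if_congr hmem rfl rfl,
      if_congr hmem' rfl rfl]
    by_cases h1 : a ∈ E <;> by_cases h2 : q.1 ∣ a <;> simp [h1, h2]
  have hmul : ∑' a, (E ∩ {a | q.1 ∣ a}).indicator f a = f q.1 * ∑' a, E.indicator f a := by
    rw [← tsum_mul_left, ← hinj.tsum_eq]
    · refine tsum_congr fun a => ?_
      have : q.1 * a ∈ E ∩ {a | q.1 ∣ a} ↔ a ∈ E := by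
        simp only [hE, Set.mem_inter_iff, Set.mem_ofPred_eq, dvd_mul_right, and_true]
        refine forall₂_congr fun p hp => not_congr ⟨fun h => ?_, fun h => h.mul_left _⟩
        refine (p.2.dvd_or_dvd h).resolve_left fun h' => hq ?_
        have := associated_iff_eq.1 ((p.2.dvd_prime_iff_associated q.2).1 h')
        rwa [← Subtype.ext this]
      by_cases ha : a ∈ E
      · rw [Set.indicator_of_mem ha, Set.indicator_of_mem (this.2 ha), map_mul]
      · rw [Set.indicator_of_notMem ha, Set.indicator_of_notMem (fun h => ha (this.1 h)), mul_zero]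
    · intro a ha
      obtain ⟨b, rfl⟩ := (Set.mem_of_indicator_ne_zero ha).2
      exact ⟨b, rfl⟩
  rw [tsum_congr hsplit, (hf'.indicator _).tsum_sub (hf'.indicator _), hmul]
  ring

lemma tsum_indicator_not_dvd (f : M →*₀ ℂ) (hf : Summable fun a => ‖f a‖)
    (S : Finset {p : M // Prime p}) :
    ∑' a, {a : M | ∀ p ∈ S, ¬ p.1 ∣ a}.indicator f a = (∏ p ∈ S, (1 - f p.1)) * ∑' a, f a := by
  classical
  induction S using Finset.induction_on with
  | empty => simp
  | insert q S hq ih =>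
    rw [Finset.prod_insert hq, mul_assoc, ← ih, ← tsum_indicator_not_dvd_insert f hf S q hq]
    simp

/-- A completely multiplicative, absolutely summable function on a factorial monoid with trivial
units has the Euler product of its values at primes. -/
lemma tendsto_prod_one_sub_mul_tsum (f : M →*₀ ℂ) (hf : Summable fun a => ‖f a‖) :
    Filter.Tendsto (fun S : Finset {p : M // Prime p} => (∏ p ∈ S, (1 - f p.1)) * ∑' a, f a)
      Filter.atTop (nhds 1) := by
  classical
  have h1 : ∑' a, Set.indicator {1} f a = 1 := by
    rw [tsum_eq_single 1 (fun b hb => by simp [hb])]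
    simp
  rw [show nhds (1 : ℂ) = nhds (∑' a, Set.indicator {1} f a) by rw [h1]]
  refine Filter.Tendsto.congr (tsum_indicator_not_dvd f hf) ?_
  refine tendsto_tsum_of_dominated_convergence hf (fun a => ?_)
    (Filter.Eventually.of_forall fun S a => norm_indicator_le_norm_self _ _)
  apply tendsto_const_nhds.congr'
  by_cases ha0 : a = 0
  · subst ha0
    exact Filter.Eventually.of_forall fun S => by simp [Set.indicator]
  by_cases ha : IsUnit a
  · obtain rfl : a = 1 := by simpa using ha
    refine Filter.Eventually.of_forall fun S => ?_
    beta_reduce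
    rw [Set.indicator_of_mem (by simp), Set.indicator_of_mem]
    exact fun p _ h => p.2.not_isUnit (isUnit_of_dvd_one h)
  · obtain ⟨p, hp, hpa⟩ := WfDvdMonoid.exists_irreducible_factor ha ha0
    filter_upwards [Filter.eventually_ge_atTop {⟨p, hp.prime⟩}] with S hS
    rw [Set.indicator_of_notMem, Set.indicator_of_notMem]
    · exact fun h => h _ (hS (Finset.mem_singleton_self _)) hpa
    · rintro rfl
      exact ha isUnit_one

lemma norm_one_sub_le_exp (z : ℂ) : ‖1 - z‖ ≤ Real.exp (-z.re + ‖z‖ ^ 2 / 2) := by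
  have h : ‖1 - z‖ ^ 2 ≤ Real.exp (-z.re + ‖z‖ ^ 2 / 2) ^ 2 := by
    rw [← Real.exp_nat_mul]
    refine le_trans (le_of_eq ?_) (Real.add_one_le_exp _)
    rw [← Complex.normSq_eq_norm_sq, ← Complex.normSq_eq_norm_sq, Complex.normSq_apply,
      Complex.normSq_apply]
    simp
    ring
  exact le_of_sq_le_sq h (Real.exp_pos _).le

lemma tsum_re_le_log_norm_tsum (f : M →*₀ ℂ) (hf : Summable fun a => ‖f a‖)
    (h2 : Summable fun p : {p : M // Prime p} => ‖f p.1‖ ^ 2) {B : ℝ} (hB : ‖∑' a, f a‖ ≤ B) :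
    ∑' p : {p : M // Prime p}, (f p.1).re ≤
      Real.log B + (∑' p : {p : M // Prime p}, ‖f p.1‖ ^ 2) / 2 := by
  have hre : Summable fun p : {p : M // Prime p} => (f p.1).re :=
    Summable.of_norm_bounded (hf.comp_injective Subtype.val_injective)
      fun p => Complex.abs_re_le_norm _
  have hlim := (tendsto_prod_one_sub_mul_tsum f hf).norm
  have hlim2 : Filter.Tendsto (fun S : Finset {p : M // Prime p} =>
      Real.exp (∑ p ∈ S, (-(f p.1).re + ‖f p.1‖ ^ 2 / 2)) * B) Filter.atTop
      (nhds (Real.exp (∑' p : {p : M // Prime p}, (-(f p.1).re + ‖f p.1‖ ^ 2 / 2)) * B)) :=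
    ((Real.continuous_exp.tendsto _).comp (hre.neg.add (h2.div_const 2)).hasSum).mul_const B
  have hle := le_of_tendsto_of_tendsto' hlim hlim2 fun S => by
    rw [norm_mul, norm_prod, Real.exp_sum]
    exact mul_le_mul (Finset.prod_le_prod (fun _ _ => norm_nonneg _)
      fun p _ => norm_one_sub_le_exp _) hB (norm_nonneg _) (by positivity)
  rw [norm_one, hre.neg.tsum_add (h2.div_const 2), tsum_neg, tsum_div_const] at hle
  have hB0 : 0 < B := by
    by_contra h
    have := mul_nonpos_of_nonneg_of_nonpos
      (Real.exp_pos (-∑' p : {p : M // Prime p}, (f p.1).re +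
        (∑' p : {p : M // Prime p}, ‖f p.1‖ ^ 2) / 2)).le (not_lt.1 h)
    linarith
  have := Real.log_le_log one_pos hle
  rw [Real.log_one, Real.log_mul (Real.exp_ne_zero _) hB0.ne', Real.log_exp] at this
  linarith

end EulerProduct

section PrimesInProgressions

open ArithmeticFunction vonMangoldt

variable {q : ℕ} [NeZero q] {a : ZMod q}

lemma exists_lower_bound_tsum_log_mul_rpow (ha : IsUnit a) :
    ∃ C : ℝ, ∀ x ∈ Set.Ioc (1 : ℝ) 2,
      (Summable fun n : ℕ =>
        {p : ℕ | p.Prime ∧ (p : ZMod q) = a}.indicator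
          (fun n : ℕ => Real.log n * (n : ℝ) ^ (-x)) n) ∧
      (q.totient : ℝ)⁻¹ / (x - 1) - C ≤ ∑' n : ℕ,
        {p : ℕ | p.Prime ∧ (p : ZMod q) = a}.indicator
          (fun n : ℕ => Real.log n * (n : ℝ) ^ (-x)) n := by
  obtain ⟨C, hC⟩ := LSeries_residueClass_lower_bound ha
  refine ⟨C + ∑' n : ℕ, (if n.Prime then 0 else residueClass a n) / n, fun x hx => ?_⟩
  have hsum : Summable fun n : ℕ => residueClass a n / (n : ℝ) ^ x :=
    LSeries.summable_real_of_abscissaOfAbsConv_lt <|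
      (abscissaOfAbsConv_residueClass_le_one a).trans_lt <| mod_cast hx.1
  have heq : ∀ n : ℕ, {p : ℕ | p.Prime ∧ (p : ZMod q) = a}.indicator
      (fun n : ℕ => Real.log n * (n : ℝ) ^ (-x)) n =
      (if n.Prime then residueClass a n else 0) / (n : ℝ) ^ x := by
    intro n
    have hneg : (n : ℝ) ^ (-x) = ((n : ℝ) ^ x)⁻¹ := Real.rpow_neg n.cast_nonneg x
    by_cases hn : n.Prime <;> by_cases hna : (n : ZMod q) = a <;>
      simp [Set.indicator, residueClass, hn, hna, vonMangoldt_apply_prime, div_eq_mul_inv, hneg]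
  have hle : ∀ n : ℕ, (if n.Prime then residueClass a n else 0) / (n : ℝ) ^ x ≤
      residueClass a n / (n : ℝ) ^ x := fun n => by
    gcongr
    split_ifs
    exacts [le_rfl, residueClass_nonneg a n]
  have hprime : Summable fun n : ℕ => (if n.Prime then residueClass a n else 0) / (n : ℝ) ^ x :=
    hsum.of_nonneg_of_le (fun n => by
      have := residueClass_nonneg a n
      split_ifs <;> positivity) hle
  simp_rw [heq]
  refine ⟨hprime, ?_⟩
  have hnon := summable_residueClass_non_primes_div a
  have : ∑' n : ℕ, residueClass a n / (n : ℝ) ^ x ≤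
      ∑' n : ℕ, (if n.Prime then residueClass a n else 0) / (n : ℝ) ^ x +
      ∑' n : ℕ, (if n.Prime then 0 else residueClass a n) / (n : ℝ) := by
    rw [← hprime.tsum_add hnon]
    refine hsum.tsum_le_tsum (fun n => ?_) (hprime.add hnon)
    by_cases hn : n.Prime
    · simp [hn]
    · simp only [hn, if_false, zero_div, zero_add]
      rcases n.eq_zero_or_pos with rfl | hn0
      · simp
      · refine div_le_div_of_nonneg_left (residueClass_nonneg a _) (mod_cast hn0) ?_
        conv_lhs => rw [← Real.rpow_one n]
        exact Real.rpow_le_rpow_of_exponent_le (by norm_cast) hx.1.le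
  linarith [hC hx]

lemma mul_log_mul_rpow_le (n : ℕ) (hn : 0 < n) (x y : ℝ) :
    (x - y) * (Real.log n * (n : ℝ) ^ (-x)) ≤ (n : ℝ) ^ (-y) - (n : ℝ) ^ (-x) := by
  have hn' : (0 : ℝ) < n := by exact_mod_cast hn
  have h1 : (n : ℝ) ^ (-y) = (n : ℝ) ^ (-x) * Real.exp (Real.log n * (x - y)) := by
    rw [← Real.rpow_def_of_pos hn', ← Real.rpow_add hn']
    ring_nf
  have h2 := Real.add_one_le_exp (Real.log n * (x - y))
  have h3 : 0 < (n : ℝ) ^ (-x) := Real.rpow_pos_of_pos hn' _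
  rw [h1]
  nlinarith [mul_le_mul_of_nonneg_left h2 h3.le]

/-- The sums `∑ p⁻ˢ` over the primes `p` of an invertible residue class are unbounded for
`s ∈ (1, 2]`. -/
lemma exists_lt_tsum_rpow_prime_residueClass (ha : IsUnit a) (B : ℝ) :
    ∃ s ∈ Set.Ioc (1 : ℝ) 2, B < ∑' n : ℕ,
      {p : ℕ | p.Prime ∧ (p : ZMod q) = a}.indicator (fun n : ℕ => (n : ℝ) ^ (-s)) n := by
  set S : Set ℕ := {p : ℕ | p.Prime ∧ (p : ZMod q) = a} with hS
  set T : ℝ → ℝ := fun s => ∑' n : ℕ, S.indicator (fun n : ℕ => (n : ℝ) ^ (-s)) n with hT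
  obtain ⟨C, hC⟩ := exists_lower_bound_tsum_log_mul_rpow ha
  have hsum : ∀ s : ℝ, 1 < s → Summable (S.indicator fun n : ℕ => (n : ℝ) ^ (-s)) := fun s hs =>
    (Real.summable_nat_rpow.2 (by linarith)).indicator S
  have hstep : ∀ x ∈ Set.Ioc (1 : ℝ) 2, ∀ y, 1 < y → y ≤ x →
      (x - y) * ((q.totient : ℝ)⁻¹ / (x - 1) - C) ≤ T y - T x := by
    intro x hx y hy hyx
    obtain ⟨hs, hb⟩ := hC x hx
    refine (mul_le_mul_of_nonneg_left hb (by linarith)).trans ?_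
    rw [hT, ← (hsum y hy).tsum_sub (hsum x hx.1), ← tsum_mul_left]
    refine (hs.mul_left _).tsum_le_tsum (fun n => ?_) ((hsum y hy).sub (hsum x hx.1))
    by_cases hn : n ∈ S
    · rw [Set.indicator_of_mem hn, Set.indicator_of_mem hn, Set.indicator_of_mem hn]
      exact mul_log_mul_rpow_le n hn.1.pos x y
    · rw [Set.indicator_of_notMem hn, Set.indicator_of_notMem hn, Set.indicator_of_notMem hn]
      simp
  set c : ℝ := (q.totient : ℝ)⁻¹ with hc
  have hcpos : 0 < c := inv_pos.mpr (mod_cast q.totient.pos_of_neZero)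
  set e : ℕ → ℝ := fun k => (1 / 2) ^ k with he
  have hepos : ∀ k, 0 < e k := fun k => by positivity
  have hele : ∀ k, e k ≤ 1 := fun k => pow_le_one₀ (by norm_num) (by norm_num)
  have hesucc : ∀ k, e (k + 1) = e k / 2 := fun k => by simp only [he, pow_succ]; ring
  have hgrow : ∀ k : ℕ, (k : ℝ) * (c / 2) - |C| * (1 - e k) ≤ T (1 + e k) - T 2 := by
    intro k
    induction k with
    | zero => norm_num [he]
    | succ k ih =>
      have h := hstep (1 + e k) ⟨by linarith [hepos k], by linarith [hele k]⟩ (1 + e (k + 1))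
        (by linarith [hepos (k + 1)]) (by rw [hesucc]; linarith [hepos k])
      have h' : (1 + e k - (1 + e (k + 1))) * (c / (1 + e k - 1) - C) = c / 2 - C * (e k / 2) := by
        rw [hesucc, add_sub_cancel_left]
        have := (hepos k).ne'
        field_simp
        ring
      rw [h'] at h
      have hCk : C * (e k / 2) ≤ |C| * (e k / 2) :=
        mul_le_mul_of_nonneg_right (le_abs_self C) (by linarith [hepos k])
      push_cast
      rw [hesucc] at h ⊢
      linarith
  obtain ⟨k, hk⟩ := exists_nat_gt ((B - T 2 + |C|) / (c / 2))
  refine ⟨1 + e k, ⟨by linarith [hepos k], by linarith [hele k]⟩, ?_⟩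
  rw [div_lt_iff₀ (by positivity)] at hk
  have := hgrow k
  have h2 : 0 ≤ |C| * e k := mul_nonneg (abs_nonneg C) (hepos k).le
  change B < T (1 + e k)
  linarith

end PrimesInProgressions

section Legendre

lemma isSquare_intCast_zmod_of_modEq_one {d : ℤ} {p : ℕ} [Fact p.Prime]
    (hp : p % (4 * d.natAbs) = 1) : IsSquare (d : ZMod p) := by
  have hodd : Odd p := by
    have h2 : p % 2 = 1 := by
      rw [← Nat.mod_mod_of_dvd p (show 2 ∣ 4 * d.natAbs from ⟨2 * d.natAbs, by ring⟩), hp]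
    exact Nat.odd_iff.2 h2
  have h1 : legendreSym p d = 1 := by
    rw [jacobiSym.legendreSym.to_jacobiSym, jacobiSym.mod_right d hodd, hp, jacobiSym.one_right]
  by_cases h0 : (d : ZMod p) = 0
  · rw [h0]
    exact IsSquare.zero
  · exact (legendreSym.eq_one_iff p h0).1 h1

/-- Thue's lemma for two linear congruences in three unknowns. -/
lemma exists_small_solution_of_congruences {p D : ℕ} (hp : 0 < p) (hD : 0 < D) (r : ℤ) :
    ∃ x y z : ℤ, (x ≠ 0 ∨ y ≠ 0 ∨ z ≠ 0) ∧ x ^ 2 ≤ p * D ∧ y ^ 2 ≤ p ∧ z ^ 2 ≤ D ∧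
      (p : ℤ) ∣ x - r * y ∧ (D : ℤ) ∣ x - z := by
  classical
  have : NeZero p := ⟨hp.ne'⟩
  have : NeZero D := ⟨hD.ne'⟩
  let box : Finset (ℕ × ℕ × ℕ) := Finset.range (Nat.sqrt (p * D) + 1) ×ˢ
    Finset.range (Nat.sqrt p + 1) ×ˢ Finset.range (Nat.sqrt D + 1)
  let φ : ℕ × ℕ × ℕ → ZMod p × ZMod D := fun v =>
    (((v.1 : ℤ) - r * v.2.1 : ℤ), ((v.1 : ℤ) - v.2.2 : ℤ))
  have hcard : (Finset.univ : Finset (ZMod p × ZMod D)).card < box.card := by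
    rw [Finset.card_univ, Fintype.card_prod, ZMod.card, ZMod.card, Finset.card_product,
      Finset.card_product, Finset.card_range, Finset.card_range, Finset.card_range]
    have h1 := Nat.lt_succ_sqrt' (p * D)
    have h2 := Nat.lt_succ_sqrt' p
    have h3 := Nat.lt_succ_sqrt' D
    simp only [Nat.succ_eq_add_one] at h1 h2 h3
    refine lt_of_pow_lt_pow_left₀ 2 (Nat.zero_le _) ?_
    calc (p * D) ^ 2 = (p * D) * (p * D) := by ring
      _ < (Nat.sqrt (p * D) + 1) ^ 2 * ((Nat.sqrt p + 1) ^ 2 * (Nat.sqrt D + 1) ^ 2) :=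
          Nat.mul_lt_mul'' h1 (Nat.mul_lt_mul'' h2 h3)
      _ = _ := by ring
  obtain ⟨u, hu, v, hv, huv, heq⟩ := Finset.exists_ne_map_eq_of_card_lt_of_maps_to hcard
    (f := φ) (fun _ _ => Finset.mem_univ _)
  simp only [box, Finset.mem_product, Finset.mem_range, Nat.lt_succ_iff] at hu hv
  have key : ∀ {m n N : ℕ}, m ≤ Nat.sqrt N → n ≤ Nat.sqrt N → ((m : ℤ) - n) ^ 2 ≤ N := by
    intro m n N hm hn
    have h : (Nat.sqrt N : ℤ) ^ 2 ≤ N := by exact_mod_cast Nat.sqrt_le' N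
    zify at hm hn
    nlinarith [Int.natCast_nonneg m, Int.natCast_nonneg n]
  obtain ⟨h1, h2⟩ := Prod.ext_iff.1 heq
  refine ⟨u.1 - v.1, u.2.1 - v.2.1, u.2.2 - v.2.2, ?_, by exact_mod_cast key hu.1 hv.1,
    key hu.2.1 hv.2.1, key hu.2.2 hv.2.2, ?_, ?_⟩
  · by_contra! h
    refine huv (Prod.ext ?_ (Prod.ext ?_ ?_)) <;> omega
  · have := (ZMod.intCast_eq_intCast_iff_dvd_sub _ _ _).1 h1.symm
    convert this using 1
    ring
  · have := (ZMod.intCast_eq_intCast_iff_dvd_sub _ _ _).1 h2.symm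
    convert this using 1
    ring

lemma eq_zero_or_eq_of_small_solution {d : ℤ} {p : ℕ} (hp : p.Prime) (hd : 2 ≤ d.natAbs)
    (hpd : IsCoprime (p : ℤ) d) {x y z : ℤ} (hx : x ^ 2 ≤ p * d.natAbs) (hy : y ^ 2 ≤ p)
    (hz : z ^ 2 ≤ d.natAbs) (hdvd : (d.natAbs : ℤ) ∣ x - z)
    (hQ : p * d ∣ x ^ 2 - d * y ^ 2 - p * z ^ 2) :
    x ^ 2 - d * y ^ 2 - p * z ^ 2 = 0 ∨ x ^ 2 - d * y ^ 2 - p * z ^ 2 = -(p * d) := by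
  have hp0 : (0 : ℤ) < p := by exact_mod_cast hp.pos
  have hy' : y ^ 2 < p := lt_of_le_of_ne hy fun h => by
    have : IsSquare (p : ℤ) := ⟨y, by rw [← h, sq]⟩
    exact (Nat.prime_iff_prime_int.1 hp).irreducible.not_isSquare this
  obtain ⟨k, hk⟩ := hQ
  rcases lt_or_ge 0 d with hd0 | hd0
  · have hab : (d.natAbs : ℤ) = d := Int.natAbs_of_nonneg hd0.le
    rw [hab] at hx hz hdvd
    have hpd0 : 0 < p * d := mul_pos hp0 hd0
    have hx' : x ^ 2 ≠ p * d := fun h => by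
      have h1 : (p : ℤ) ∣ x := (Nat.prime_iff_prime_int.1 hp).dvd_of_dvd_pow (h ▸ dvd_mul_right _ _)
      obtain ⟨m, rfl⟩ := h1
      have h2 : (p : ℤ) * m ^ 2 = d := mul_left_cancel₀ hp0.ne' (by linear_combination h)
      have h3 := hpd.isUnit_of_dvd' dvd_rfl ⟨m ^ 2, h2.symm⟩
      exact (Nat.prime_iff_prime_int.1 hp).not_isUnit h3
    have hx'' : x ^ 2 < p * d := lt_of_le_of_ne hx hx'
    have h1 : k < 1 := by nlinarith [sq_nonneg y, sq_nonneg z]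
    have h2 : -2 < k := by nlinarith [sq_nonneg x]
    obtain rfl | rfl : k = 0 ∨ k = -1 := by omega
    · left; linarith
    · right; linarith
  · have hab : (d.natAbs : ℤ) = -d := Int.ofNat_natAbs_of_nonpos hd0
    have hd2 : 2 ≤ -d := by rw [← hab]; exact_mod_cast hd
    rw [hab] at hx hz hdvd
    have hpd0 : 0 < p * (-d) := mul_pos hp0 (by linarith)
    have h1 : -2 < k := by nlinarith [sq_nonneg x, sq_nonneg y, sq_nonneg z]
    have h2 : k ≤ 1 := by nlinarith [sq_nonneg x, sq_nonneg y, sq_nonneg z]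
    obtain rfl | rfl | rfl : k = 0 ∨ k = -1 ∨ k = 1 := by omega
    · left; linarith
    · right; linarith
    · exfalso
      have hx0 : x ^ 2 = 0 := by nlinarith [sq_nonneg x, sq_nonneg y, sq_nonneg z]
      have hz0 : z ^ 2 = -d := by nlinarith [sq_nonneg x, sq_nonneg y, sq_nonneg z]
      obtain rfl : x = 0 := by simpa using hx0
      obtain ⟨m, hm⟩ := hdvd
      have : z = d * m := by linarith
      subst this
      have hm0 : m ≠ 0 := by rintro rfl; simp at hz0; linarith
      have : 1 ≤ m ^ 2 := by have := sq_pos_of_ne_zero hm0; linarith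
      have := le_mul_of_one_le_right (sq_nonneg d) this
      rw [mul_pow] at hz0
      nlinarith

/-- A prime `p ≡ 1 mod 4|d|` is a norm from `ℚ(√d)`. -/
lemma exists_sq_sub_mul_sq_eq_prime_mul_sq {d : ℤ} {p : ℕ} (hp : p.Prime) (hd : 2 ≤ d.natAbs)
    (hsq : ¬ IsSquare d) (hmod : p % (4 * d.natAbs) = 1) :
    ∃ x y k : ℤ, k ≠ 0 ∧ x ^ 2 - d * y ^ 2 = p * k ^ 2 := by
  have := Fact.mk hp
  obtain ⟨r, hr⟩ := isSquare_intCast_zmod_of_modEq_one hmod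
  obtain ⟨r, rfl⟩ := ZMod.intCast_surjective r
  have hr' : (p : ℤ) ∣ r ^ 2 - d := by
    rw [← ZMod.intCast_eq_intCast_iff_dvd_sub]
    push_cast
    rw [hr, sq]
  have hpd1 : d ∣ p - 1 := by
    have h1 : 4 * d.natAbs ∣ p - 1 := (Nat.modEq_iff_dvd' hp.one_le).1 (by
      rw [Nat.ModEq, hmod, Nat.mod_eq_of_lt (by omega)])
    have h2 : (d.natAbs : ℤ) ∣ ((p - 1 : ℕ) : ℤ) := by
      exact_mod_cast (dvd_mul_left _ _).trans h1
    rw [Nat.cast_sub hp.one_le, Nat.cast_one] at h2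
    exact Int.natAbs_dvd.1 h2
  have hcop : IsCoprime (p : ℤ) d := by
    obtain ⟨m, hm⟩ := hpd1
    exact ⟨1, -m, by linear_combination hm⟩
  obtain ⟨x, y, z, h0, hx, hy, hz, hxy, hxz⟩ :=
    exists_small_solution_of_congruences hp.pos (show 0 < d.natAbs by omega) r
  have hQ : p * d ∣ x ^ 2 - d * y ^ 2 - p * z ^ 2 := by
    refine hcop.mul_dvd ?_ ?_
    · obtain ⟨m, hm⟩ := hxy
      obtain ⟨n, hn⟩ := hr'
      exact ⟨m * (x + r * y) + n * y ^ 2 - z ^ 2, by linear_combination (x + r * y) * hm + y ^ 2 * hn⟩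
    · obtain ⟨m, hm⟩ := Int.natAbs_dvd.1 hxz
      obtain ⟨n, hn⟩ := hpd1
      exact ⟨m * (x + z) - n * z ^ 2 - y ^ 2, by linear_combination (x + z) * hm - z ^ 2 * hn⟩
  rcases eq_zero_or_eq_of_small_solution hp hd hcop (by exact_mod_cast hx) hy hz hxz hQ with h | h
  · refine ⟨x, y, z, ?_, by linarith⟩
    rintro rfl
    have hxy' : x * x = d * (y * y) := by linarith
    by_cases hy0 : y = 0
    · subst hy0
      simp at hxy'
      simp [hxy'] at h0
    · obtain ⟨m, rfl⟩ : y ∣ x := by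
        rw [← Int.pow_dvd_pow_iff two_ne_zero]
        exact ⟨d, by linarith⟩
      refine hsq ⟨m, mul_left_cancel₀ (mul_ne_zero hy0 hy0) (by linarith)⟩
  · refine ⟨x * z + d * y, x + y * z, z ^ 2 - d, fun hz' => hsq ⟨z, by linarith⟩, ?_⟩
    linear_combination (z ^ 2 - d) * h

end Legendre

section QuadraticField

variable {K : Type*} [Field K] [NumberField K]

lemma exists_two_embeddings (hdeg : Module.finrank ℚ K = 2) :
    ∃ σ τ : K →+* ℂ, σ ≠ τ ∧ ∀ ρ, ρ = σ ∨ ρ = τ := by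
  classical
  have h : (Finset.univ : Finset (K →+* ℂ)).card = 2 := by
    rw [Finset.card_univ, NumberField.Embeddings.card, hdeg]
  obtain ⟨σ, τ, hne, heq⟩ := Finset.card_eq_two.1 h
  exact ⟨σ, τ, hne, fun ρ => by simpa [heq] using Finset.mem_univ ρ⟩

lemma norm_int_eq_mul {σ τ : K →+* ℂ} (hne : σ ≠ τ)
    (huniv : ∀ ρ, ρ = σ ∨ ρ = τ) (a : 𝓞 K) :
    ((Algebra.norm ℤ a : ℤ) : ℂ) = σ a * τ a := by
  classical
  have huniv' : (Finset.univ : Finset (K →+* ℂ)) = {σ, τ} := by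
    ext ρ
    simpa using huniv ρ
  have h1 := Algebra.norm_eq_prod_embeddings ℚ ℂ (a : K)
  rw [← Algebra.coe_norm_int] at h1
  simp only [map_intCast] at h1
  rw [h1, ← Finset.prod_pair (f := fun ρ : K →+* ℂ => ρ a) hne]
  rw [← Fintype.prod_equiv (RingHom.equivRatAlgHom K ℂ) (fun ρ : K →+* ℂ => ρ a)
    (fun ρ : K →ₐ[ℚ] ℂ => ρ a) (fun _ => rfl), huniv']

lemma natAbs_norm_int_eq_mul {σ τ : K →+* ℂ} (hne : σ ≠ τ)
    (huniv : ∀ ρ, ρ = σ ∨ ρ = τ) (a : 𝓞 K) :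
    ((Algebra.norm ℤ a).natAbs : ℝ) = ‖σ a‖ * ‖τ a‖ := by
  rw [← norm_mul, ← norm_int_eq_mul hne huniv, Complex.norm_intCast, Nat.cast_natAbs, Int.cast_abs]

lemma exists_embedding_ne {σ τ : K →+* ℂ} (hne : σ ≠ τ) : ∃ α : 𝓞 K, σ α ≠ τ α := by
  by_contra! h
  refine hne (RingHom.ext fun x => ?_)
  obtain ⟨a, b, _, rfl⟩ := IsFractionRing.div_surjective (A := 𝓞 K) x
  rw [map_div₀, map_div₀]
  exact congr_arg₂ _ (h a) (h b)

/-- A quadratic field contains the square root of a nonsquare integer. -/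
lemma exists_norm_eq_sq_sub_mul_sq (hdeg : Module.finrank ℚ K = 2) :
    ∃ (d : ℤ) (θ : 𝓞 K), 2 ≤ d.natAbs ∧ ¬ IsSquare d ∧
      ∀ x y : ℤ, Algebra.norm ℤ ((x : 𝓞 K) + y * θ) = x ^ 2 - d * y ^ 2 := by
  obtain ⟨σ, τ, hne, huniv⟩ := exists_two_embeddings hdeg
  obtain ⟨α, hα⟩ := exists_embedding_ne hne
  have hn := norm_int_eq_mul hne huniv
  obtain ⟨t, ht⟩ : ∃ t : ℤ, (t : ℂ) = σ α + τ α := by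
    refine ⟨Algebra.norm ℤ (1 + α) - 1 - Algebra.norm ℤ α, ?_⟩
    push_cast
    rw [hn, hn]
    simp
    ring
  set n := Algebra.norm ℤ α
  set θ : 𝓞 K := 2 * (2 * α - t) with hθ
  have hσ : σ θ = 2 * (σ α - τ α) := by
    simp only [hθ, map_mul, map_sub, map_ofNat, map_intCast]
    rw [ht]
    ring
  have hτ : τ θ = - (2 * (σ α - τ α)) := by
    simp only [hθ, map_mul, map_sub, map_ofNat, map_intCast]
    rw [ht]
    ring
  have hd : ((4 * (t ^ 2 - 4 * n) : ℤ) : ℂ) = σ θ ^ 2 := by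
    rw [hσ]
    push_cast
    rw [ht, hn]
    ring
  have hσ0 : σ θ ≠ 0 := by
    rw [hσ]
    exact mul_ne_zero two_ne_zero (sub_ne_zero.2 hα)
  refine ⟨4 * (t ^ 2 - 4 * n), θ, ?_, ?_, fun x y => ?_⟩
  · have : t ^ 2 - 4 * n ≠ 0 := by
      intro h
      rw [h] at hd
      exact pow_ne_zero 2 hσ0 (by simpa using hd.symm)
    omega
  · rintro ⟨m, hm⟩
    have h : σ (θ ^ 2 : K) = σ ((m : K) ^ 2) := by
      rw [map_pow, ← hd, hm]
      simp [sq]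
    have h' := σ.injective h
    have : σ θ = τ θ := by
      rcases sq_eq_sq_iff_eq_or_eq_neg.1 h' with h | h <;> rw [h] <;> simp
    rw [hτ, ← hσ] at this
    exact hσ0 (self_eq_neg.1 this)
  · have h : ((Algebra.norm ℤ ((x : 𝓞 K) + y * θ) : ℤ) : ℂ) =
        ((x ^ 2 - 4 * (t ^ 2 - 4 * n) * y ^ 2 : ℤ) : ℂ) := by
      rw [hn, Int.cast_sub, Int.cast_mul (4 * _), hd]
      simp only [map_add, map_mul, map_intCast]
      rw [hτ, ← hσ]
      push_cast
      ring
    exact_mod_cast h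

lemma norm_intCast_of_quadratic (hdeg : Module.finrank ℚ K = 2) (k : ℤ) :
    Algebra.norm ℤ (k : 𝓞 K) = k ^ 2 := by
  have : (k : 𝓞 K) = algebraMap ℤ (𝓞 K) k := by simp
  rw [this, Algebra.norm_algebraMap, RingOfIntegers.rank, hdeg]

/-- The image of the absolute norm is closed under division. -/
def NormClosedUnderDivision (K : Type*) [Field K] [NumberField K] : Prop :=
  ∀ a b : 𝓞 K, a ≠ 0 → b ≠ 0 →
    (Algebra.norm ℤ a).natAbs ∣ (Algebra.norm ℤ b).natAbs →
    ∃ c : 𝓞 K, (Algebra.norm ℤ a).natAbs * (Algebra.norm ℤ c).natAbs = (Algebra.norm ℤ b).natAbs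

lemma NormClosedUnderDivision.exists_natAbs_norm_eq (hdiv : NormClosedUnderDivision K)
    (hdeg : Module.finrank ℚ K = 2) {b : 𝓞 K} {k : ℤ} {m : ℕ} (hk : k ≠ 0) (hm : m ≠ 0)
    (hb : (Algebra.norm ℤ b).natAbs = k.natAbs ^ 2 * m) :
    ∃ c : 𝓞 K, (Algebra.norm ℤ c).natAbs = m := by
  have hk' : k.natAbs ^ 2 ≠ 0 := pow_ne_zero 2 (Int.natAbs_ne_zero.2 hk)
  have hb0 : b ≠ 0 := by
    rintro rfl
    rw [Algebra.norm_zero] at hb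
    exact mul_ne_zero hk' hm hb.symm
  have hkn : (Algebra.norm ℤ (k : 𝓞 K)).natAbs = k.natAbs ^ 2 := by
    rw [norm_intCast_of_quadratic hdeg, Int.natAbs_pow]
  obtain ⟨c, hc⟩ := hdiv k b (by exact_mod_cast hk) hb0 (by rw [hkn, hb]; exact dvd_mul_right _ _)
  rw [hkn, hb] at hc
  exact ⟨c, mul_left_cancel₀ hk' hc⟩

lemma NormClosedUnderDivision.exists_prime_norms (hdiv : NormClosedUnderDivision K)
    (hdeg : Module.finrank ℚ K = 2) :
    ∃ q : ℕ, q ≠ 0 ∧ ∀ p : ℕ, p.Prime → (p : ZMod q) = 1 →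
      ∃ c : 𝓞 K, (Algebra.norm ℤ c).natAbs = p := by
  obtain ⟨d, θ, hd, hsq, hθ⟩ := exists_norm_eq_sq_sub_mul_sq hdeg
  refine ⟨4 * d.natAbs, by omega, fun p hp hmod => ?_⟩
  have hmod' : p % (4 * d.natAbs) = 1 := by
    have := (ZMod.natCast_eq_natCast_iff' p 1 (4 * d.natAbs)).1 (by simpa using hmod)
    rwa [Nat.mod_eq_of_lt (show 1 < 4 * d.natAbs by omega)] at this
  obtain ⟨x, y, k, hk, h⟩ := exists_sq_sub_mul_sq_eq_prime_mul_sq hp hd hsq hmod'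
  refine hdiv.exists_natAbs_norm_eq hdeg (b := x + y * θ) hk hp.ne_zero ?_
  rw [hθ, h, Int.natAbs_mul, Int.natAbs_pow, Int.natAbs_natCast, mul_comm]

/-- If the image of the norm is closed under division, then a prime ideal whose class is a square
is principal. -/
lemma NormClosedUnderDivision.mk0_prime_eq_one (hdiv : NormClosedUnderDivision K)
    (hdeg : Module.finrank ℚ K = 2) (P : nonZeroDivisors (Ideal (𝓞 K))) (hP : Prime (P : Ideal (𝓞 K)))
    (g : ClassGroup (𝓞 K)) (hg : ClassGroup.mk0 P = g ^ 2) : ClassGroup.mk0 P = 1 := by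
  obtain ⟨I, hI⟩ := ClassGroup.mk0_surjective g⁻¹
  obtain ⟨J, hJ⟩ : ∃ J, J = I ^ 2 * P := ⟨_, rfl⟩
  have hprinc : ClassGroup.mk0 J = 1 := by
    rw [hJ, map_mul, map_pow, hI, hg, inv_pow, inv_mul_cancel]
  obtain ⟨b, hb⟩ := ((ClassGroup.mk0_eq_one_iff J.2).1 hprinc).principal
  have hPn : Ideal.absNorm (P : Ideal (𝓞 K)) ≠ 0 := Ideal.absNorm_ne_zero_of_nonZeroDivisors P
  have hbn : (Algebra.norm ℤ b).natAbs =
      (Ideal.absNorm (I : Ideal (𝓞 K)) : ℤ).natAbs ^ 2 * Ideal.absNorm (P : Ideal (𝓞 K)) := by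
    rw [← Ideal.absNorm_span_singleton, ← Ideal.submodule_span_eq, ← hb, hJ]
    simp
  obtain ⟨c, hc⟩ := hdiv.exists_natAbs_norm_eq hdeg
    (by exact_mod_cast Ideal.absNorm_ne_zero_of_nonZeroDivisors I) hPn hbn
  rw [← Ideal.absNorm_span_singleton] at hc
  have hPprime : (P : Ideal (𝓞 K)).IsPrime := Ideal.isPrime_of_prime hP
  obtain ⟨p, hp, hpP⟩ : ∃ p : ℕ, p.Prime ∧ (p : 𝓞 K) ∈ (P : Ideal (𝓞 K)) := by
    have h1 : Ideal.absNorm (P : Ideal (𝓞 K)) ≠ 1 := by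
      rw [Ne, Ideal.absNorm_eq_one_iff]
      exact hPprime.ne_top
    have hmem := Ideal.absNorm_mem (P : Ideal (𝓞 K))
    by_contra! h
    have : ∀ n : ℕ, n ≠ 0 → (n : 𝓞 K) ∉ (P : Ideal (𝓞 K)) := by
      intro n
      induction n using Nat.recOnMul with
      | zero => simp
      | one => simpa using (Ideal.ne_top_iff_one _).1 hPprime.ne_top
      | prime p hp => exact fun _ => h p hp
      | mul a b iha ihb =>
        intro hab hmem
        push_cast at hmem
        rcases hPprime.mem_or_mem hmem with h | h
        · exact iha (left_ne_zero_of_mul hab) h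
        · exact ihb (right_ne_zero_of_mul hab) h
    exact this _ hPn hmem
  have hpn : Ideal.absNorm (Ideal.span {(p : 𝓞 K)}) = p ^ 2 := by
    rw [Ideal.absNorm_span_natCast, RingOfIntegers.rank, hdeg]
  obtain ⟨Q, hQ⟩ : (P : Ideal (𝓞 K)) ∣ Ideal.span {(p : 𝓞 K)} :=
    Ideal.dvd_iff_le.2 ((Ideal.span_singleton_le_iff_mem _).2 hpP)
  have hp0 : (p : 𝓞 K) ≠ 0 := by exact_mod_cast hp.ne_zero
  have hspan0 : Ideal.span {(p : 𝓞 K)} ≠ 0 := by simpa using hp0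
  have hQ0 : Q ≠ 0 := by
    rintro rfl
    exact hspan0 (by rw [hQ, mul_zero])
  have hmulnorm : Ideal.absNorm (P : Ideal (𝓞 K)) * Ideal.absNorm Q = p ^ 2 := by
    rw [← map_mul, ← hQ, hpn]
  have hinv : ClassGroup.mk0 P * ClassGroup.mk0 ⟨Q, mem_nonZeroDivisors_of_ne_zero hQ0⟩ = 1 := by
    rw [← map_mul, ClassGroup.mk0_eq_one_iff]
    change Submodule.IsPrincipal ((P : Ideal (𝓞 K)) * Q)
    rw [← hQ]
    exact ⟨⟨p, rfl⟩⟩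
  have hone : ∀ J : nonZeroDivisors (Ideal (𝓞 K)), Ideal.span {c} = (J : Ideal (𝓞 K)) →
      ClassGroup.mk0 J = 1 := fun J hJ => by
    rw [ClassGroup.mk0_eq_one_iff, ← hJ]
    exact ⟨⟨c, rfl⟩⟩
  obtain ⟨e, he, hPe⟩ := (Nat.dvd_prime_pow hp).1 (Dvd.intro _ hmulnorm)
  interval_cases e
  · exact absurd (Ideal.absNorm_eq_one_iff.1 (by simpa using hPe)) hPprime.ne_top
  · rw [pow_one] at hPe
    have hQp : Ideal.absNorm Q = p := by
      rw [hPe, sq] at hmulnorm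
      exact mul_left_cancel₀ hp.ne_zero hmulnorm
    have hcprime : Prime (Ideal.span {c}) := by
      refine (Ideal.irreducible_of_irreducible_absNorm ?_).prime
      rw [hc, hPe]
      exact hp
    have hQprime : Prime Q := by
      refine (Ideal.irreducible_of_irreducible_absNorm ?_).prime
      rw [hQp]
      exact hp
    have hcdvd : Ideal.span {c} ∣ P * Q := by
      rw [← hQ, Ideal.dvd_iff_le, Ideal.span_singleton_le_iff_mem]
      have := Ideal.absNorm_mem (Ideal.span {c})
      rwa [hc, hPe] at this
    rcases hcprime.dvd_or_dvd hcdvd with h | h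
    · exact hone P (associated_iff_eq.1 ((hcprime.dvd_prime_iff_associated hP).1 h))
    · rw [hone ⟨Q, mem_nonZeroDivisors_of_ne_zero hQ0⟩
        (associated_iff_eq.1 ((hcprime.dvd_prime_iff_associated hQprime).1 h)), mul_one] at hinv
      exact hinv
  · have hQ1 : Ideal.absNorm Q = 1 := by
      rw [hPe] at hmulnorm
      exact mul_left_cancel₀ (pow_ne_zero 2 hp.ne_zero) (by rw [hmulnorm, mul_one])
    rw [Ideal.absNorm_eq_one_iff, ← Ideal.one_eq_top] at hQ1
    subst hQ1
    have : (⟨1, mem_nonZeroDivisors_of_ne_zero hQ0⟩ : nonZeroDivisors (Ideal (𝓞 K))) = 1 := rfl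
    rwa [this, map_one, mul_one] at hinv

end QuadraticField

section Tent

/-- The tent function of width and height `L`. -/
noncomputable def tent (L x : ℝ) : ℝ := max 0 (L - |x|)

lemma tent_nonneg (L x : ℝ) : 0 ≤ tent L x := le_max_left _ _

lemma tent_le {L : ℝ} (hL : 0 ≤ L) (x : ℝ) : tent L x ≤ L :=
  max_le hL (sub_le_self _ (abs_nonneg x))

lemma abs_lt_of_tent_ne_zero {L x : ℝ} (h : tent L x ≠ 0) : |x| < L := by
  by_contra! hx
  exact h (max_eq_left (by linarith))

lemma abs_tent_sub_tent_le (L x y : ℝ) : |tent L x - tent L y| ≤ |x - y| := by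
  unfold tent
  refine (abs_max_sub_max_le_max 0 (L - |x|) 0 (L - |y|)).trans (max_le (by simp) ?_)
  rw [sub_sub_sub_cancel_left, abs_sub_comm x y]
  exact abs_abs_sub_abs_le _ _

/-- The integer translates of the tent function form a partition of a constant. -/
lemma hasSum_tent_add_zsmul {b : ℝ} (hb : b ≠ 0) (x : ℝ) :
    HasSum (fun n : ℤ => tent |b| (x + n * b)) |b| := by
  have hb' : 0 < |b| := abs_pos.2 hb
  obtain ⟨f, k, hf0, hf1, rfl⟩ : ∃ (f : ℝ) (k : ℤ), 0 ≤ f ∧ f < 1 ∧ x = (k + f) * b :=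
    ⟨Int.fract (x / b), ⌊x / b⌋, Int.fract_nonneg _, Int.fract_lt_one _, by
      rw [Int.floor_add_fract, div_mul_cancel₀ _ hb]⟩
  have hval (n : ℤ) : tent |b| ((k + f) * b + n * b) = |b| * max 0 (1 - |f + (k + n : ℤ)|) := by
    rw [tent, mul_max_of_nonneg _ _ hb'.le, mul_zero, mul_sub, mul_one, ← abs_mul]
    push_cast
    congr 4
    ring
  have hsum : ∑ n ∈ ({-k, -k - 1} : Finset ℤ), tent |b| ((k + f) * b + n * b) = |b| := by
    rw [Finset.sum_pair (by omega), hval, hval, add_neg_cancel,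
      show k + (-k - 1) = -1 by ring, Int.cast_zero, add_zero, abs_of_nonneg hf0,
      max_eq_right (by linarith), Int.cast_neg, Int.cast_one,
      abs_of_neg (show f + -1 < 0 by linarith), max_eq_right (by linarith)]
    ring
  have hsupp : ∀ n ∉ ({-k, -k - 1} : Finset ℤ), tent |b| ((k + f) * b + n * b) = 0 := ?_
  · simpa only [hsum] using hasSum_sum_of_ne_finset_zero hsupp
  intro n hn
  rw [hval, max_eq_left, mul_zero]
  simp only [Finset.mem_insert, Finset.mem_singleton, not_or] at hn
  rcases lt_or_ge (k + n) 0 with h | h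
  · have : ((k + n : ℤ) : ℝ) ≤ -2 := by exact_mod_cast (by omega : k + n ≤ -2)
    rw [abs_of_neg (by linarith)]
    linarith
  · have : (1 : ℝ) ≤ ((k + n : ℤ) : ℝ) := by exact_mod_cast (by omega : 1 ≤ k + n)
    rw [abs_of_pos (by linarith)]
    linarith

/-- The weight function `(x, y) ↦ (x y)⁻ˢ` localized to a neighbourhood of the diagonal. -/
noncomputable def diagWeight (L s x y : ℝ) : ℝ :=
  tent L (Real.log x - Real.log y) * (x * y) ^ (-s)

lemma diagWeight_nonneg (L s : ℝ) {x y : ℝ} (hx : 0 ≤ x) (hy : 0 ≤ y) :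
    0 ≤ diagWeight L s x y :=
  mul_nonneg (tent_nonneg _ _) (Real.rpow_nonneg (mul_nonneg hx hy) _)

lemma diagWeight_le {L s x y : ℝ} (hL : 0 ≤ L) (hs : 0 ≤ s) (h : 1 ≤ x * y) :
    diagWeight L s x y ≤ L :=
  (mul_le_mul (tent_le hL _) (Real.rpow_le_one_of_one_le_of_nonpos h (neg_nonpos.2 hs))
    (Real.rpow_nonneg (by linarith) _) hL).trans (mul_one L).le

lemma exp_mul_max_le_of_diagWeight_ne_zero {L s x y : ℝ} (hL : 0 ≤ L) (hx : 0 < x) (hy : 0 < y)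
    (h : diagWeight L s x y ≠ 0) :
    Real.exp (-L) * max x y ≤ x ∧ Real.exp (-L) * max x y ≤ y := by
  have hlt := abs_lt.1 (abs_lt_of_tent_ne_zero (left_ne_zero_of_mul h))
  have key {u v : ℝ} (hu : 0 < u) (hv : 0 < v) (huv : Real.log u - Real.log v < L) :
      Real.exp (-L) * u ≤ v := by
    calc Real.exp (-L) * u = Real.exp (-L + Real.log u) := by rw [Real.exp_add, Real.exp_log hu]
      _ ≤ Real.exp (Real.log v) := Real.exp_le_exp.2 (by linarith)
      _ = v := Real.exp_log hv
  have h1 : Real.exp (-L) ≤ 1 := Real.exp_le_one_iff.2 (neg_nonpos.2 hL)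
  rw [mul_max_of_nonneg _ _ (Real.exp_pos _).le]
  exact ⟨max_le (mul_le_of_le_one_left hx.le h1) (key hy hx (by linarith)),
    max_le (key hx hy hlt.2) (mul_le_of_le_one_left hy.le h1)⟩

lemma diagWeight_le_rpow_max {L s x y : ℝ} (hL : 0 ≤ L) (hs : 0 ≤ s) (hx : 0 < x) (hy : 0 < y) :
    diagWeight L s x y ≤ L * Real.exp (-L) ^ (-(2 * s)) * max x y ^ (-(2 * s)) := by
  have hM : 0 < max x y := lt_max_of_lt_left hx
  by_cases h : diagWeight L s x y = 0
  · rw [h]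
    positivity
  obtain ⟨h1, h2⟩ := exp_mul_max_le_of_diagWeight_ne_zero hL hx hy h
  rw [mul_assoc, ← Real.mul_rpow (Real.exp_pos _).le hM.le]
  refine mul_le_mul (tent_le hL _) ?_ (by positivity) hL
  rw [neg_mul_eq_mul_neg, Real.rpow_mul (by positivity), Real.rpow_two, sq]
  exact Real.rpow_le_rpow_of_nonpos (by positivity) (mul_le_mul h1 h2 (by positivity) hx.le)
    (by linarith)

lemma abs_log_sub_log_le {m x y : ℝ} (hm : 0 < m) (hx : m ≤ x) (hy : m ≤ y) :
    |Real.log x - Real.log y| ≤ |x - y| / m := by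
  have key {u v : ℝ} (hu : m ≤ u) (hv : m ≤ v) :
      Real.log u - Real.log v ≤ |u - v| / m := by
    have hu0 : 0 < u := hm.trans_le hu
    have hv0 : 0 < v := hm.trans_le hv
    rw [← Real.log_div hu0.ne' hv0.ne']
    calc Real.log (u / v) ≤ u / v - 1 := Real.log_le_sub_one_of_pos (by positivity)
      _ = (u - v) / v := by field_simp
      _ ≤ |u - v| / v := by gcongr; exact le_abs_self _
      _ ≤ |u - v| / m := by gcongr
  exact abs_le'.2 ⟨key hx hy, by rw [neg_sub, abs_sub_comm x y]; exact key hy hx⟩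

lemma abs_rpow_neg_sub_rpow_neg_le {m s x y : ℝ} (hm : 0 < m) (hs : 0 ≤ s) (hx : m ≤ x)
    (hy : m ≤ y) :
    |x ^ (-s) - y ^ (-s)| ≤ s * |Real.log x - Real.log y| * m ^ (-s) := by
  have key {u v : ℝ} (hu : m ≤ u) (hv : m ≤ v) :
      u ^ (-s) - v ^ (-s) ≤ s * |Real.log u - Real.log v| * m ^ (-s) := by
    have hu0 : 0 < u := hm.trans_le hu
    have hv0 : 0 < v := hm.trans_le hv
    have h1 : v ^ (-s) = u ^ (-s) * Real.exp (s * (Real.log u - Real.log v)) := by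
      rw [Real.rpow_def_of_pos hu0, Real.rpow_def_of_pos hv0, ← Real.exp_add]
      congr 1
      ring
    calc u ^ (-s) - v ^ (-s)
        = (1 - Real.exp (s * (Real.log u - Real.log v))) * u ^ (-s) := by rw [h1]; ring
      _ ≤ s * |Real.log u - Real.log v| * u ^ (-s) := by
          gcongr
          have := Real.add_one_le_exp (s * (Real.log u - Real.log v))
          have := mul_le_mul_of_nonneg_left (neg_abs_le (Real.log u - Real.log v)) hs
          linarith
      _ ≤ _ := by
          refine mul_le_mul_of_nonneg_left ?_ (by positivity)
          exact Real.rpow_le_rpow_of_nonpos hm hu (by linarith)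
  exact abs_le'.2 ⟨key hx hy, by rw [neg_sub, abs_sub_comm (Real.log x)]; exact key hy hx⟩

lemma abs_diagWeight_sub_le_of_le {L ρ m s x y x' y' : ℝ} (hL : 0 ≤ L) (hm : 1 ≤ m)
    (hs : s ∈ Set.Ioc (1 : ℝ) 2) (hx : m ≤ x) (hy : m ≤ y) (hx' : m ≤ x') (hy' : m ≤ y')
    (hxx : |x - x'| ≤ ρ) (hyy : |y - y'| ≤ ρ) :
    |diagWeight L s x y - diagWeight L s x' y'| ≤ (2 + 4 * L) * ρ * m⁻¹ ^ 3 := by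
  have hm0 : 0 < m := by linarith
  have hlx := (abs_log_sub_log_le hm0 hx hx').trans (div_le_div_of_nonneg_right hxx hm0.le)
  have hly := (abs_log_sub_log_le hm0 hy hy').trans (div_le_div_of_nonneg_right hyy hm0.le)
  have hρ : 0 ≤ ρ / m := (abs_nonneg _).trans hlx
  have hm2 : (m * m) ^ (-s) ≤ m⁻¹ ^ 2 := by
    rw [show m⁻¹ ^ 2 = (m * m) ^ (-1 : ℝ) by rw [Real.rpow_neg_one]; field_simp]
    exact Real.rpow_le_rpow_of_exponent_le (by nlinarith) (by linarith [hs.1])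
  have hmm : 0 < m * m := by positivity
  have hxy : m * m ≤ x * y := mul_le_mul hx hy hm0.le (hm0.le.trans hx)
  have hxy' : m * m ≤ x' * y' := mul_le_mul hx' hy' hm0.le (hm0.le.trans hx')
  have hw : |tent L (Real.log x - Real.log y) - tent L (Real.log x' - Real.log y')|
      ≤ 2 * (ρ / m) := by
    refine (abs_tent_sub_tent_le _ _ _).trans ?_
    rw [show Real.log x - Real.log y - (Real.log x' - Real.log y') =
      (Real.log x - Real.log x') - (Real.log y - Real.log y') by ring]
    refine (abs_sub _ _).trans ?_
    linarith
  have hlog : |Real.log (x * y) - Real.log (x' * y')| ≤ 2 * (ρ / m) := by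
    rw [Real.log_mul (by linarith) (by linarith), Real.log_mul (by linarith) (by linarith),
      show Real.log x + Real.log y - (Real.log x' + Real.log y') =
      (Real.log x - Real.log x') + (Real.log y - Real.log y') by ring]
    refine (abs_add_le _ _).trans ?_
    linarith
  have hpow : |(x * y) ^ (-s) - (x' * y') ^ (-s)| ≤ 2 * (2 * (ρ / m)) * m⁻¹ ^ 2 := by
    refine (abs_rpow_neg_sub_rpow_neg_le hmm (by linarith [hs.1]) hxy hxy').trans ?_
    gcongr
    exact hs.2
  have hle : (x * y) ^ (-s) ≤ m⁻¹ ^ 2 :=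
    (Real.rpow_le_rpow_of_nonpos hmm hxy (by linarith [hs.1])).trans hm2
  have hnn : 0 ≤ (x * y) ^ (-s) := Real.rpow_nonneg (hmm.le.trans hxy) _
  unfold diagWeight
  set w := tent L (Real.log x - Real.log y)
  set w' := tent L (Real.log x' - Real.log y')
  have hw' : |w'| ≤ L := by
    rw [abs_of_nonneg (tent_nonneg _ _)]
    exact tent_le hL _
  calc |w * (x * y) ^ (-s) - w' * (x' * y') ^ (-s)|
      = |(w - w') * (x * y) ^ (-s) + w' * ((x * y) ^ (-s) - (x' * y') ^ (-s))| := by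
        congr 1
        ring
    _ ≤ |w - w'| * (x * y) ^ (-s) + |w'| * |(x * y) ^ (-s) - (x' * y') ^ (-s)| := by
        refine (abs_add_le _ _).trans ?_
        rw [abs_mul, abs_mul, abs_of_nonneg hnn]
    _ ≤ 2 * (ρ / m) * m⁻¹ ^ 2 + L * (2 * (2 * (ρ / m)) * m⁻¹ ^ 2) := by gcongr
    _ = (2 + 4 * L) * ρ * m⁻¹ ^ 3 := by
        rw [div_eq_mul_inv]
        ring

lemma exists_abs_diagWeight_sub_le {L ρ : ℝ} (hL : 0 ≤ L) (hρ : 0 ≤ ρ) :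
    ∃ C : ℝ, 0 ≤ C ∧ ∀ s ∈ Set.Ioc (1 : ℝ) 2, ∀ x y x' y' : ℝ, 0 < x → 0 < y → 0 < x' → 0 < y' →
      1 ≤ x * y → 1 ≤ x' * y' → |x - x'| ≤ ρ → |y - y'| ≤ ρ →
      |diagWeight L s x y - diagWeight L s x' y'| ≤ C * (max x y)⁻¹ ^ 3 := by
  set k := 4 * Real.exp L with hk
  have hk0 : 0 < k := by positivity
  have hkexp : k * Real.exp (-L) = 4 := by
    rw [hk, mul_assoc, ← Real.exp_add, add_neg_cancel, Real.exp_zero, mul_one]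
  set M₀ := k * (ρ + 1) with hM₀
  refine ⟨max (L * M₀ ^ 3) ((2 + 4 * L) * ρ * k ^ 3), le_max_of_le_left (by positivity), ?_⟩
  intro s hs x y x' y' hx hy hx' hy' hxy hxy' hxx hyy
  have hs0 : 0 ≤ s := by linarith [hs.1]
  set M := max x y with hM
  have hM0 : 0 < M := lt_max_of_lt_left hx
  rcases le_or_gt M M₀ with h | h
  · refine le_trans ?_ (mul_le_mul_of_nonneg_right (le_max_left _ _) (by positivity))
    calc |diagWeight L s x y - diagWeight L s x' y'| ≤ L :=
          abs_sub_le_of_nonneg_of_le (diagWeight_nonneg _ _ hx.le hy.le) (diagWeight_le hL hs0 hxy)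
            (diagWeight_nonneg _ _ hx'.le hy'.le) (diagWeight_le hL hs0 hxy')
      _ = L * 1 := (mul_one L).symm
      _ ≤ L * (M₀ * M⁻¹) ^ 3 := by
          gcongr
          refine one_le_pow₀ ?_
          rwa [← div_eq_mul_inv, one_le_div hM0]
      _ = L * M₀ ^ 3 * M⁻¹ ^ 3 := by ring
  · refine le_trans ?_ (mul_le_mul_of_nonneg_right (le_max_right _ _) (by positivity))
    by_cases h0 : diagWeight L s x y = 0 ∧ diagWeight L s x' y' = 0
    · rw [h0.1, h0.2, sub_zero, abs_zero]
      positivity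
    set m := M / k with hm
    have hmk : Real.exp (-L) * M = 4 * m := by
      rw [hm, ← hkexp]
      field_simp
    have hmρ : ρ + 1 < m := by
      rw [hm, lt_div_iff₀ hk0, mul_comm]
      exact h
    have hx1 := abs_le.1 hxx
    have hy1 := abs_le.1 hyy
    have hall : m ≤ x ∧ m ≤ y ∧ m ≤ x' ∧ m ≤ y' := by
      by_cases h1 : diagWeight L s x y = 0
      · obtain ⟨h2, h3⟩ := exp_mul_max_le_of_diagWeight_ne_zero hL hx' hy' fun h2 => h0 ⟨h1, h2⟩
        have hM' : M - ρ ≤ max x' y' := by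
          rw [sub_le_iff_le_add, hM]
          exact max_le (by linarith [le_max_left x' y']) (by linarith [le_max_right x' y'])
        have hexp : Real.exp (-L) ≤ 1 := Real.exp_le_one_iff.2 (neg_nonpos.2 hL)
        have := mul_le_mul_of_nonneg_left hM' (Real.exp_pos (-L)).le
        have := mul_le_mul_of_nonneg_right hexp hρ
        refine ⟨?_, ?_, ?_, ?_⟩ <;> linarith
      · obtain ⟨h2, h3⟩ := exp_mul_max_le_of_diagWeight_ne_zero hL hx hy h1
        rw [← hM] at h2 h3
        refine ⟨?_, ?_, ?_, ?_⟩ <;> linarith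
    refine (abs_diagWeight_sub_le_of_le hL (by linarith) hs hall.1 hall.2.1 hall.2.2.1
      hall.2.2.2 hxx hyy).trans (le_of_eq ?_)
    rw [hm, inv_div, div_eq_mul_inv]
    ring

end Tent

section UnitSum

variable {K : Type*} [Field K] {σ τ : K →+* ℂ}

lemma norm_embedding_pos (σ : K →+* ℂ) {a : 𝓞 K} (ha : a ≠ 0) : 0 < ‖σ a‖ :=
  norm_pos_iff.2 ((map_ne_zero σ).2 (RingOfIntegers.coe_ne_zero_iff.2 ha))

/-- The homomorphism `u ↦ log |σ u| - log |τ u|` on units. -/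
noncomputable def unitLog (σ τ : K →+* ℂ) : Additive (𝓞 K)ˣ →+ ℝ where
  toFun u := Real.log ‖σ (u.toMul : 𝓞 K)‖ - Real.log ‖τ (u.toMul : 𝓞 K)‖
  map_zero' := by simp
  map_add' u v := by
    have hu := u.toMul.ne_zero
    have hv := v.toMul.ne_zero
    simp only [toMul_add, Units.val_mul, map_mul, norm_mul]
    rw [Real.log_mul (norm_embedding_pos σ hu).ne' (norm_embedding_pos σ hv).ne',
      Real.log_mul (norm_embedding_pos τ hu).ne' (norm_embedding_pos τ hv).ne']
    ring

lemma log_norm_sub_log_norm_units_mul (u : (𝓞 K)ˣ) {a : 𝓞 K} (ha : a ≠ 0) :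
    Real.log ‖σ (u * a : 𝓞 K)‖ - Real.log ‖τ (u * a : 𝓞 K)‖ =
      (Real.log ‖σ a‖ - Real.log ‖τ a‖) + unitLog σ τ (Additive.ofMul u) := by
  have hu := u.ne_zero
  simp only [map_mul, norm_mul]
  rw [Real.log_mul (norm_embedding_pos σ hu).ne' (norm_embedding_pos σ ha).ne',
    Real.log_mul (norm_embedding_pos τ hu).ne' (norm_embedding_pos τ ha).ne']
  change _ = _ + (Real.log ‖σ u‖ - Real.log ‖τ u‖)
  ring

variable [NumberField K]

lemma one_le_norm_mul_norm (hne : σ ≠ τ) (huniv : ∀ ρ, ρ = σ ∨ ρ = τ) {a : 𝓞 K} (ha : a ≠ 0) :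
    1 ≤ ‖σ a‖ * ‖τ a‖ := by
  rw [← natAbs_norm_int_eq_mul hne huniv]
  exact_mod_cast Nat.one_le_iff_ne_zero.2 (Int.natAbs_ne_zero.2 (Algebra.norm_ne_zero_iff.2 ha))

lemma one_le_max_norm (hne : σ ≠ τ) (huniv : ∀ ρ, ρ = σ ∨ ρ = τ) {a : 𝓞 K} (ha : a ≠ 0) :
    1 ≤ max ‖σ a‖ ‖τ a‖ := by
  by_contra! h
  obtain ⟨h1, h2⟩ := max_lt_iff.1 h
  have := one_le_norm_mul_norm hne huniv ha
  nlinarith [norm_nonneg (σ a), norm_nonneg (τ a)]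

/-- The lattice `𝓞 K` in `ℂ × ℂ` has rank two, so `∑ ‖a‖⁻ʳ` converges for `r > 2`. -/
lemma summable_max_norm_rpow (hdeg : Module.finrank ℚ K = 2) (hne : σ ≠ τ)
    (huniv : ∀ ρ, ρ = σ ∨ ρ = τ) {r : ℝ} (hr : 2 < r) :
    Summable fun a : 𝓞 K => max ‖σ a‖ ‖τ a‖ ^ (-r) := by
  let ι : 𝓞 K →+ ℂ × ℂ :=
    ((σ.prod τ).comp (algebraMap (𝓞 K) K)).toAddMonoidHom
  have hι (a : 𝓞 K) : ‖ι a‖ = max ‖σ a‖ ‖τ a‖ := rfl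
  have hinj : Function.Injective ι := by
    refine (injective_iff_map_eq_zero ι).2 fun a ha => ?_
    by_contra h
    have := one_le_max_norm hne huniv h
    rw [← hι, ha, norm_zero] at this
    linarith
  let Λ : Submodule ℤ (ℂ × ℂ) := LinearMap.range ι.toIntLinearMap
  let e : 𝓞 K ≃ₗ[ℤ] Λ := LinearEquiv.ofInjective ι.toIntLinearMap hinj
  have he (a : 𝓞 K) : ‖e a‖ = max ‖σ a‖ ‖τ a‖ := rfl
  have hdisc : DiscreteTopology Λ := by
    refine DiscreteTopology.of_forall_le_norm zero_lt_one fun x hx => ?_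
    obtain ⟨a, rfl⟩ := e.surjective x
    rw [he]
    exact one_le_max_norm hne huniv fun h => hx (by rw [h, map_zero])
  have hrank : Module.finrank ℤ Λ = 2 := by
    rw [← e.finrank_eq, RingOfIntegers.rank, hdeg]
  have := ZLattice.summable_norm_rpow Λ (-r) (by rw [hrank]; push_cast; linarith)
  exact (e.toEquiv.summable_iff).2 this

lemma finite_setOf_max_norm_le (hne : σ ≠ τ)
    (huniv : ∀ ρ, ρ = σ ∨ ρ = τ) (R : ℝ) : {a : 𝓞 K | max ‖σ a‖ ‖τ a‖ ≤ R}.Finite := by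
  have h : {x : K | IsIntegral ℤ x ∧ ∀ φ : K →+* ℂ, ‖φ x‖ ≤ R}.Finite :=
    Embeddings.finite_of_norm_le K ℂ R
  refine (h.preimage (RingOfIntegers.coe_injective.injOn)).subset fun a ha => ?_
  refine ⟨RingOfIntegers.isIntegral_coe a, fun φ => ?_⟩
  rcases huniv φ with rfl | rfl
  · exact (le_max_left _ _).trans ha
  · exact (le_max_right _ _).trans ha

lemma norm_mul_norm_unit (hne : σ ≠ τ) (huniv : ∀ ρ, ρ = σ ∨ ρ = τ) (u : (𝓞 K)ˣ) :
    ‖σ (u : 𝓞 K)‖ * ‖τ (u : 𝓞 K)‖ = 1 := by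
  rw [← natAbs_norm_int_eq_mul hne huniv, Int.natAbs_of_isUnit (u.isUnit.map _), Nat.cast_one]

lemma finite_setOf_abs_unitLog_le (hne : σ ≠ τ)
    (huniv : ∀ ρ, ρ = σ ∨ ρ = τ) (R : ℝ) : {u | |unitLog σ τ u| ≤ R}.Finite := by
  have hfin := finite_setOf_max_norm_le hne huniv (Real.exp R)
  refine (hfin.preimage (f := fun u : Additive (𝓞 K)ˣ => (u.toMul : 𝓞 K))
    (fun u _ v _ h => ?_)).subset fun u hu => ?_
  · exact Additive.toMul.injective (Units.ext h)
  · have h1 := norm_mul_norm_unit hne huniv u.toMul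
    have hσ := norm_embedding_pos σ u.toMul.ne_zero
    have hτ := norm_embedding_pos τ u.toMul.ne_zero
    have h2 := congr_arg Real.log h1
    rw [Real.log_mul hσ.ne' hτ.ne', Real.log_one] at h2
    have h3 : |Real.log ‖σ (u.toMul : 𝓞 K)‖ - Real.log ‖τ (u.toMul : 𝓞 K)‖| ≤ R := hu
    have h4 := abs_le.1 h3
    have hR : 0 ≤ R := (abs_nonneg _).trans h3
    change max ‖σ (u.toMul : 𝓞 K)‖ ‖τ (u.toMul : 𝓞 K)‖ ≤ Real.exp R
    refine max_le ?_ ?_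
    · rw [← Real.log_le_iff_le_exp hσ]
      linarith
    · rw [← Real.log_le_iff_le_exp hτ]
      linarith

lemma exists_range_unitLog (hne : σ ≠ τ)
    (huniv : ∀ ρ, ρ = σ ∨ ρ = τ) :
    ∃ b : ℝ, (unitLog σ τ).range = AddSubgroup.closure {b} := by
  have hfin : ((fun u => |unitLog σ τ u|) '' {u | |unitLog σ τ u| ≤ 1} ∩ {x | 0 < x}).Finite :=
    ((finite_setOf_abs_unitLog_le hne huniv 1).image _).inter_of_left _
  obtain ⟨δ, hδ0, hδ⟩ : ∃ δ > (0 : ℝ), ∀ u, unitLog σ τ u ∈ Set.Ioo 0 δ → False := by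
    rcases Set.eq_empty_or_nonempty
      ((fun u => |unitLog σ τ u|) '' {u | |unitLog σ τ u| ≤ 1} ∩ {x | 0 < x}) with he | hn
    · refine ⟨1, one_pos, fun u hu => ?_⟩
      have : |unitLog σ τ u| ∈
          ((fun u => |unitLog σ τ u|) '' {u | |unitLog σ τ u| ≤ 1} ∩ {x | 0 < x}) :=
        ⟨⟨u, by simpa [abs_of_pos hu.1] using hu.2.le, rfl⟩, abs_pos.2 hu.1.ne'⟩
      rw [he] at this
      exact this
    · obtain ⟨x, ⟨⟨v, hv, rfl⟩, hx0⟩, hmin⟩ := Set.exists_min_image _ id hfin hn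
      refine ⟨|unitLog σ τ v|, hx0, fun u hu => ?_⟩
      have h1 : |unitLog σ τ u| < |unitLog σ τ v| := by rw [abs_of_pos hu.1]; exact hu.2
      have := hmin |unitLog σ τ u| ⟨⟨u, h1.le.trans hv, rfl⟩, abs_pos.2 hu.1.ne'⟩
      exact absurd this (not_le.2 h1)
  refine AddSubgroup.cyclic_of_isolated_zero hδ0 (Set.disjoint_left.2 ?_)
  rintro _ ⟨u, rfl⟩ hu
  exact hδ u hu

/-- The sum of a suitable tent weight over all associates of a nonzero element is independent
of the element. -/
lemma exists_hasSum_tent (hne : σ ≠ τ)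
    (huniv : ∀ ρ, ρ = σ ∨ ρ = τ) :
    ∃ L > (0 : ℝ), ∃ c > (0 : ℝ), ∀ a : 𝓞 K, a ≠ 0 →
      HasSum (fun u : (𝓞 K)ˣ =>
        tent L (Real.log ‖σ (u * a : 𝓞 K)‖ - Real.log ‖τ (u * a : 𝓞 K)‖)) c := by
  by_cases hplace : InfinitePlace.mk σ = InfinitePlace.mk τ
  · have heq (x : K) : ‖σ x‖ = ‖τ x‖ := by
      simpa using congr_arg (fun w : InfinitePlace K => w x) hplace
    have hfin : Finite (𝓞 K)ˣ := by
      refine Set.finite_univ_iff.1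
        ((finite_setOf_abs_unitLog_le hne huniv 1).subset fun u _ => ?_)
      change |Real.log ‖σ (u.toMul : 𝓞 K)‖ - Real.log ‖τ (u.toMul : 𝓞 K)‖| ≤ 1
      simp [heq]
    have := Fintype.ofFinite (𝓞 K)ˣ
    refine ⟨1, one_pos, Fintype.card (𝓞 K)ˣ, by exact_mod_cast Fintype.card_pos, fun a _ => ?_⟩
    have : (Fintype.card (𝓞 K)ˣ : ℝ) = ∑ _u : (𝓞 K)ˣ, (1 : ℝ) := by simp
    rw [this]
    convert! hasSum_fintype _ using 2
    simp [heq, tent]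
  · obtain ⟨b, hb⟩ := exists_range_unitLog hne huniv
    have hb0 : b ≠ 0 := by
      rintro rfl
      obtain ⟨u, hu⟩ := NumberField.Units.dirichletUnitTheorem.exists_unit K (InfinitePlace.mk σ)
      have h1 := hu (InfinitePlace.mk τ) (Ne.symm hplace)
      rw [InfinitePlace.apply] at h1
      have h2 : unitLog σ τ (Additive.ofMul u) = 0 := by
        have : unitLog σ τ (Additive.ofMul u) ∈ (unitLog σ τ).range := ⟨_, rfl⟩
        rwa [hb, AddSubgroup.closure_singleton_zero, AddSubgroup.mem_bot] at this
      have h2' : Real.log ‖σ (u : 𝓞 K)‖ - Real.log ‖τ (u : 𝓞 K)‖ = 0 := h2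
      have h3 := congr_arg Real.log (norm_mul_norm_unit hne huniv u)
      rw [Real.log_mul (norm_embedding_pos σ u.ne_zero).ne' (norm_embedding_pos τ u.ne_zero).ne',
        Real.log_one] at h3
      linarith
    obtain ⟨ε, hε⟩ : b ∈ (unitLog σ τ).range := by
      rw [hb]
      exact AddSubgroup.subset_closure rfl
    have hker : Finite (unitLog σ τ).ker := by
      refine ((finite_setOf_abs_unitLog_le hne huniv 1).subset fun u hu => ?_).to_subtype
      have : unitLog σ τ u = 0 := hu
      simp [this]
    have := Fintype.ofFinite (unitLog σ τ).ker
    let Φ : (unitLog σ τ).ker × ℤ → (𝓞 K)ˣ := fun p => (p.1.1 + p.2 • ε).toMul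
    have hΦ (p) : unitLog σ τ (Additive.ofMul (Φ p)) = p.2 * b := by
      have : unitLog σ τ p.1.1 = 0 := p.1.2
      change unitLog σ τ (p.1.1 + p.2 • ε) = _
      rw [map_add, this, zero_add, map_zsmul, hε, zsmul_eq_mul]
    have hbij : Function.Bijective Φ := by
      refine ⟨fun p q hpq => ?_, fun u => ?_⟩
      · have h1 : (p.2 : ℝ) * b = q.2 * b := by rw [← hΦ, ← hΦ, hpq]
        have h2 : p.2 = q.2 := by exact_mod_cast mul_right_cancel₀ hb0 h1
        have h3 : p.1.1 + p.2 • ε = q.1.1 + q.2 • ε := Additive.toMul.injective hpq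
        rw [h2] at h3
        exact Prod.ext (Subtype.ext (add_right_cancel h3)) h2
      · have : unitLog σ τ (Additive.ofMul u) ∈ (unitLog σ τ).range := ⟨_, rfl⟩
        rw [hb, AddSubgroup.mem_closure_singleton] at this
        obtain ⟨n, hn⟩ := this
        refine ⟨(⟨Additive.ofMul u - n • ε, ?_⟩, n), ?_⟩
        · rw [AddMonoidHom.mem_ker, map_sub, map_zsmul, hε, hn, sub_self]
        · simp [Φ]
    refine ⟨|b|, abs_pos.2 hb0, Fintype.card (unitLog σ τ).ker * |b|,
      mul_pos (by exact_mod_cast Fintype.card_pos) (abs_pos.2 hb0), fun a ha => ?_⟩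
    rw [← (Equiv.ofBijective Φ hbij).hasSum_iff]
    have h1 : HasSum (fun _ : (unitLog σ τ).ker => (1 : ℝ)) (Fintype.card (unitLog σ τ).ker) := by
      simpa using hasSum_fintype (fun _ : (unitLog σ τ).ker => (1 : ℝ))
    have h2 := hasSum_tent_add_zsmul hb0 (Real.log ‖σ a‖ - Real.log ‖τ a‖)
    have h3 := h1.mul h2 (h1.summable.mul_of_nonneg h2.summable (fun _ => zero_le_one)
      (fun _ => tent_nonneg _ _))
    convert! h3 using 2 with p
    change tent _ (Real.log ‖σ (Φ p * a : 𝓞 K)‖ - Real.log ‖τ (Φ p * a : 𝓞 K)‖) = _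
    rw [log_norm_sub_log_norm_units_mul (Φ p) ha, hΦ, one_mul]

end UnitSum

section PartialZeta

variable {K : Type*} [Field K] {σ τ : K →+* ℂ}

/-- The weight `diagWeight` evaluated at the archimedean absolute values of `a`. -/
noncomputable def intWeight (σ τ : K →+* ℂ) (L s : ℝ) (a : 𝓞 K) : ℝ :=
  diagWeight L s ‖σ a‖ ‖τ a‖

lemma intWeight_nonneg (L s : ℝ) (a : 𝓞 K) : 0 ≤ intWeight σ τ L s a :=
  diagWeight_nonneg _ _ (norm_nonneg _) (norm_nonneg _)

lemma intWeight_zero (L : ℝ) {s : ℝ} (hs : 0 < s) : intWeight σ τ L s 0 = 0 := by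
  simp [intWeight, diagWeight, Real.zero_rpow (neg_ne_zero.2 hs.ne')]

variable [NumberField K]

lemma intWeight_le (hne : σ ≠ τ) (huniv : ∀ ρ, ρ = σ ∨ ρ = τ) {L s : ℝ} (hL : 0 ≤ L)
    (hs : 0 < s) (a : 𝓞 K) : intWeight σ τ L s a ≤ L := by
  rcases eq_or_ne a 0 with rfl | ha
  · rwa [intWeight_zero L hs]
  · exact diagWeight_le hL hs.le (one_le_norm_mul_norm hne huniv ha)

lemma summable_intWeight (hdeg : Module.finrank ℚ K = 2) (hne : σ ≠ τ)
    (huniv : ∀ ρ, ρ = σ ∨ ρ = τ) {L s : ℝ} (hL : 0 ≤ L) (hs : 1 < s) :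
    Summable (intWeight σ τ L s) := by
  refine .of_nonneg_of_le (intWeight_nonneg L s) (fun a => ?_)
    ((summable_max_norm_rpow hdeg hne huniv (r := 2 * s) (by linarith)).mul_left
      (L * Real.exp (-L) ^ (-(2 * s))))
  rcases eq_or_ne a 0 with rfl | ha
  · rw [intWeight_zero L (by linarith)]
    positivity
  · exact diagWeight_le_rpow_max hL (by linarith) (norm_embedding_pos σ ha)
      (norm_embedding_pos τ ha)

/-- Translation by a fixed integer changes the weight by a summable amount, uniformly in `s`. -/
lemma exists_summable_abs_intWeight_sub_le (hdeg : Module.finrank ℚ K = 2) (hne : σ ≠ τ)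
    (huniv : ∀ ρ, ρ = σ ∨ ρ = τ) {L : ℝ} (hL : 0 ≤ L) (r : 𝓞 K) :
    ∃ H : 𝓞 K → ℝ, Summable H ∧ ∀ s ∈ Set.Ioc (1 : ℝ) 2, ∀ b,
      |intWeight σ τ L s (r + b) - intWeight σ τ L s b| ≤ H b := by
  classical
  obtain ⟨C, hC, h⟩ := exists_abs_diagWeight_sub_le (ρ := max ‖σ r‖ ‖τ r‖) hL
    (le_max_of_le_left (norm_nonneg _))
  have hsum := summable_max_norm_rpow hdeg hne huniv (r := 3) (by norm_num)
  refine ⟨fun b => C * max ‖σ b‖ ‖τ b‖ ^ (-3 : ℝ) + (if b ∈ ({0, -r} : Finset (𝓞 K)) then L else 0),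
    (hsum.mul_left C).add
      (summable_of_ne_finset_zero (s := {0, -r}) fun b hb => if_neg hb), fun s hs b => ?_⟩
  have hs0 : 0 < s := by linarith [hs.1]
  have hnn : 0 ≤ max ‖σ b‖ ‖τ b‖ := le_max_of_le_left (norm_nonneg _)
  by_cases hb : b ∈ ({0, -r} : Finset (𝓞 K))
  · simp only [if_pos hb]
    have h1 : |intWeight σ τ L s (r + b) - intWeight σ τ L s b| ≤ L :=
      abs_sub_le_of_nonneg_of_le (intWeight_nonneg _ _ _) (intWeight_le hne huniv hL hs0 _)
        (intWeight_nonneg _ _ _) (intWeight_le hne huniv hL hs0 _)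
    have : 0 ≤ C * max ‖σ b‖ ‖τ b‖ ^ (-3 : ℝ) := by positivity
    linarith
  · simp only [if_neg hb, add_zero]
    simp only [Finset.mem_insert, Finset.mem_singleton, not_or] at hb
    have hb' : r + b ≠ 0 := fun h => hb.2 (eq_neg_of_add_eq_zero_right h)
    have key (φ : K →+* ℂ) : |‖φ b‖ - ‖φ (r + b : 𝓞 K)‖| ≤ ‖φ r‖ := by
      refine (abs_norm_sub_norm_le _ _).trans (le_of_eq ?_)
      rw [← norm_neg]
      simp
    rw [abs_sub_comm, show (-3 : ℝ) = -((3 : ℕ) : ℝ) by norm_num, Real.rpow_neg hnn,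
      Real.rpow_natCast, ← inv_pow]
    exact h s hs _ _ _ _ (norm_embedding_pos σ hb.1) (norm_embedding_pos τ hb.1)
      (norm_embedding_pos σ hb') (norm_embedding_pos τ hb')
      (one_le_norm_mul_norm hne huniv hb.1) (one_le_norm_mul_norm hne huniv hb')
      ((key σ).trans (le_max_left _ _)) ((key τ).trans (le_max_right _ _))

/-- The weighted sums over the ring of integers and over a nonzero ideal `J` agree up to the factor
`N(J)` and a bounded error. -/
lemma exists_abs_tsum_intWeight_sub_le (hdeg : Module.finrank ℚ K = 2) (hne : σ ≠ τ)
    (huniv : ∀ ρ, ρ = σ ∨ ρ = τ) {L : ℝ} (hL : 0 ≤ L) {J : Ideal (𝓞 K)} (hJ : J ≠ 0) :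
    ∃ B : ℝ, ∀ s ∈ Set.Ioc (1 : ℝ) 2,
      |∑' a, intWeight σ τ L s a - Ideal.absNorm J * ∑' b : J, intWeight σ τ L s b| ≤ B := by
  have hfin : Finite (𝓞 K ⧸ J) := Ideal.finiteQuotientOfFreeOfNeBot J hJ
  have := Fintype.ofFinite (𝓞 K ⧸ J)
  choose H hH hle using exists_summable_abs_intWeight_sub_le hdeg hne huniv hL
  let rep : 𝓞 K ⧸ J → 𝓞 K := Quotient.out
  have hrep (q) : Ideal.Quotient.mk J (rep q) = q := Quotient.out_eq q
  let Φ : (𝓞 K ⧸ J) × J → 𝓞 K := fun p => rep p.1 + p.2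
  have hΦ (p) : Ideal.Quotient.mk J (Φ p) = p.1 := by
    rw [map_add, hrep, Ideal.Quotient.eq_zero_iff_mem.2 p.2.2, add_zero]
  have hbij : Function.Bijective Φ := by
    refine ⟨fun p q hpq => ?_, fun a => ?_⟩
    · have h1 : p.1 = q.1 := by rw [← hΦ, ← hΦ, hpq]
      have h2 : rep p.1 + (p.2 : 𝓞 K) = rep q.1 + q.2 := hpq
      rw [h1] at h2
      exact Prod.ext h1 (Subtype.ext (add_left_cancel h2))
    · refine ⟨(Ideal.Quotient.mk J a, ⟨a - rep (Ideal.Quotient.mk J a), ?_⟩), ?_⟩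
      · rw [← Ideal.Quotient.eq_zero_iff_mem, map_sub, hrep, sub_self]
      · simp [Φ]
  refine ⟨∑ q : 𝓞 K ⧸ J, ∑' b : J, H (rep q) b, fun s hs => ?_⟩
  have hsum := summable_intWeight hdeg hne huniv hL hs.1
  have hsumJ : Summable fun b : J => intWeight σ τ L s b :=
    hsum.comp_injective Subtype.val_injective
  have hsumq (q) : Summable fun b : J => intWeight σ τ L s (rep q + b) :=
    hsum.comp_injective ((add_right_injective (rep q)).comp Subtype.val_injective)
  have hcard : (Ideal.absNorm J : ℝ) = ∑ _q : 𝓞 K ⧸ J, (1 : ℝ) := by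
    rw [Ideal.absNorm_apply, Submodule.cardQuot_apply, Nat.card_eq_fintype_card]
    simp
  have htot : ∑' a, intWeight σ τ L s a = ∑ q, ∑' b : J, intWeight σ τ L s (rep q + b) := by
    have hΦsum : Summable fun p => intWeight σ τ L s (Φ p) := hsum.comp_injective hbij.1
    calc ∑' a, intWeight σ τ L s a = ∑' p, intWeight σ τ L s (Φ p) :=
          ((Equiv.ofBijective Φ hbij).tsum_eq (intWeight σ τ L s)).symm
      _ = ∑' q, ∑' b : J, intWeight σ τ L s (Φ (q, b)) := hΦsum.tsum_prod
      _ = ∑ q, ∑' b : J, intWeight σ τ L s (rep q + b) := tsum_fintype _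
  rw [htot, hcard, Finset.sum_mul, ← Finset.sum_sub_distrib]
  refine (Finset.abs_sum_le_sum_abs _ _).trans (Finset.sum_le_sum fun q _ => ?_)
  rw [one_mul, ← (hsumq q).tsum_sub hsumJ]
  exact tsum_of_norm_bounded (f := fun b : J => intWeight σ τ L s (rep q + b) - intWeight σ τ L s b)
    (g := fun b : J => H (rep q) b)
    ((hH (rep q)).comp_injective Subtype.val_injective).hasSum fun b => hle (rep q) s hs b

/-- A nonzero element of an ideal `J` is given by an integral ideal in the class inverse to that
of `J`, together with a unit. -/
lemma exists_injective_units_prod (J : nonZeroDivisors (Ideal (𝓞 K))) {C : ClassGroup (𝓞 K)}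
    (hJC : ClassGroup.mk0 J * C = 1) :
    ∃ (gen : {I : nonZeroDivisors (Ideal (𝓞 K)) // ClassGroup.mk0 I = C} → 𝓞 K)
      (Φ : {I : nonZeroDivisors (Ideal (𝓞 K)) // ClassGroup.mk0 I = C} × (𝓞 K)ˣ →
        (J : Ideal (𝓞 K))),
      (∀ I, gen I ≠ 0) ∧ (∀ p, (Φ p : 𝓞 K) = p.2 * gen p.1) ∧
      (∀ p, Ideal.span {(Φ p : 𝓞 K)} = (J : Ideal (𝓞 K)) * (p.1.1 : Ideal (𝓞 K))) ∧
      Function.Injective Φ ∧ ∀ b : (J : Ideal (𝓞 K)), (b : 𝓞 K) ≠ 0 → b ∈ Set.range Φ := by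
  have hgen (I : {I : nonZeroDivisors (Ideal (𝓞 K)) // ClassGroup.mk0 I = C}) :
      ∃ a : 𝓞 K, a ≠ 0 ∧ (J : Ideal (𝓞 K)) * (I.1 : Ideal (𝓞 K)) = Ideal.span {a} := by
    obtain ⟨A, hA⟩ : ∃ A, A = J * I.1 := ⟨_, rfl⟩
    have h1 : ClassGroup.mk0 A = 1 := by rw [hA, map_mul, I.2, hJC]
    obtain ⟨a, ha⟩ := ((ClassGroup.mk0_eq_one_iff A.2).1 h1).principal
    have hAa : (A : Ideal (𝓞 K)) = Ideal.span {a} := ha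
    refine ⟨a, ?_, ?_⟩
    · rintro rfl
      exact nonZeroDivisors.coe_ne_zero A (by rw [hAa]; simp)
    · rw [← hAa, hA, Submonoid.coe_mul]
  choose gen hgen0 hgen using hgen
  have hmem (p : {I : nonZeroDivisors (Ideal (𝓞 K)) // ClassGroup.mk0 I = C} × (𝓞 K)ˣ) :
      (p.2 : 𝓞 K) * gen p.1 ∈ (J : Ideal (𝓞 K)) := by
    refine Ideal.mul_mem_left _ _ (Ideal.mul_le_left (I := (J : Ideal (𝓞 K))) (J := p.1.1) ?_)
    rw [hgen]
    exact Ideal.mem_span_singleton_self _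
  have hspan (p : {I : nonZeroDivisors (Ideal (𝓞 K)) // ClassGroup.mk0 I = C} × (𝓞 K)ˣ) :
      Ideal.span {(p.2 : 𝓞 K) * gen p.1} = (J : Ideal (𝓞 K)) * (p.1.1 : Ideal (𝓞 K)) := by
    rw [hgen]
    exact Ideal.span_singleton_mul_left_unit p.2.isUnit _
  refine ⟨gen, fun p => ⟨p.2 * gen p.1, hmem p⟩, hgen0, fun _ => rfl, hspan, ?_, ?_⟩
  · intro p q hpq
    have h3 : (p.2 : 𝓞 K) * gen p.1 = q.2 * gen q.1 := congr_arg Subtype.val hpq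
    have h1 : (J : Ideal (𝓞 K)) * (p.1.1 : Ideal (𝓞 K)) = J * (q.1.1 : Ideal (𝓞 K)) := by
      rw [← hspan, ← hspan, h3]
    have h2 : p.1 = q.1 :=
      Subtype.ext (Subtype.ext (mul_left_cancel₀ (nonZeroDivisors.coe_ne_zero J) h1))
    rw [h2] at h3
    exact Prod.ext h2 (Units.ext (mul_right_cancel₀ (hgen0 _) h3))
  · intro b hb0
    obtain ⟨I, hI⟩ : (J : Ideal (𝓞 K)) ∣ Ideal.span {(b : 𝓞 K)} :=
      Ideal.dvd_iff_le.2 ((Ideal.span_singleton_le_iff_mem _).2 b.2)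
    have hI0 : I ≠ 0 := by
      rintro rfl
      rw [mul_zero] at hI
      exact hb0 (Ideal.span_singleton_eq_bot.1 hI)
    obtain ⟨I', hI'⟩ : ∃ I' : nonZeroDivisors (Ideal (𝓞 K)), (I' : Ideal (𝓞 K)) = I :=
      ⟨⟨I, mem_nonZeroDivisors_of_ne_zero hI0⟩, rfl⟩
    have hmk : ClassGroup.mk0 I' = C := by
      obtain ⟨A, hA⟩ : ∃ A, A = J * I' := ⟨_, rfl⟩
      have h1 : ClassGroup.mk0 A = 1 := by
        rw [ClassGroup.mk0_eq_one_iff A.2, hA, Submonoid.coe_mul, hI', ← hI]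
        exact ⟨⟨_, rfl⟩⟩
      rw [hA, map_mul] at h1
      exact mul_left_cancel (h1.trans hJC.symm)
    have hass : Ideal.span {gen ⟨I', hmk⟩} = Ideal.span {(b : 𝓞 K)} := by
      rw [← hgen, hI, hI']
    obtain ⟨u, hu⟩ := Ideal.span_singleton_eq_span_singleton.1 hass
    exact ⟨(⟨I', hmk⟩, u), Subtype.ext (by rw [← hu, mul_comm])⟩

/-- The weighted sum over an ideal `J` is a multiple of the partial zeta function of the class
inverse to that of `J`. -/
lemma hasSum_absNorm_rpow_mk0_eq (hdeg : Module.finrank ℚ K = 2) (hne : σ ≠ τ)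
    (huniv : ∀ ρ, ρ = σ ∨ ρ = τ) {L c : ℝ} (hL : 0 < L) (hc : 0 < c)
    (htent : ∀ a : 𝓞 K, a ≠ 0 → HasSum (fun u : (𝓞 K)ˣ =>
        tent L (Real.log ‖σ (u * a : 𝓞 K)‖ - Real.log ‖τ (u * a : 𝓞 K)‖)) c)
    (J : nonZeroDivisors (Ideal (𝓞 K))) {C : ClassGroup (𝓞 K)} (hJC : ClassGroup.mk0 J * C = 1)
    {s : ℝ} (hs : 1 < s) :
    HasSum (fun I : {I : nonZeroDivisors (Ideal (𝓞 K)) // ClassGroup.mk0 I = C} =>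
        (Ideal.absNorm (I.1 : Ideal (𝓞 K)) : ℝ) ^ (-s))
      (c⁻¹ * (Ideal.absNorm (J : Ideal (𝓞 K)) : ℝ) ^ s *
        ∑' b : (J : Ideal (𝓞 K)), intWeight σ τ L s b) := by
  obtain ⟨gen, Φ, hgen0, hΦ, hspan, hinj, hrange⟩ := exists_injective_units_prod J hJC
  have hs0 : 0 < s := by linarith
  have hsumJ : Summable fun b : (J : Ideal (𝓞 K)) => intWeight σ τ L s b :=
    (summable_intWeight hdeg hne huniv hL.le hs).comp_injective Subtype.val_injective
  have hJ0 : 0 < (Ideal.absNorm (J : Ideal (𝓞 K)) : ℝ) :=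
    Nat.cast_pos.2 (Nat.pos_of_ne_zero (Ideal.absNorm_ne_zero_of_nonZeroDivisors J))
  have hfib (I : {I : nonZeroDivisors (Ideal (𝓞 K)) // ClassGroup.mk0 I = C}) :
      HasSum (fun u : (𝓞 K)ˣ => intWeight σ τ L s (Φ (I, u)))
        (c * ((Ideal.absNorm (J : Ideal (𝓞 K)) : ℝ) ^ (-s) *
          (Ideal.absNorm (I.1 : Ideal (𝓞 K)) : ℝ) ^ (-s))) := by
    refine ((htent (gen I) (hgen0 I)).mul_right _).congr_fun fun u => ?_
    rw [intWeight, diagWeight, ← hΦ (I, u), ← natAbs_norm_int_eq_mul hne huniv,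
      ← Ideal.absNorm_span_singleton, hspan, map_mul, Nat.cast_mul,
      Real.mul_rpow (Nat.cast_nonneg _) (Nat.cast_nonneg _)]
  have htot : HasSum (fun p => intWeight σ τ L s (Φ p))
      (∑' b : (J : Ideal (𝓞 K)), intWeight σ τ L s b) :=
    (hinj.hasSum_iff fun b hb => by
      rw [not_not.1 (mt (hrange b) hb), intWeight_zero L hs0]).2 hsumJ.hasSum
  convert! (htot.prod_fiberwise hfib).mul_left
    (c⁻¹ * (Ideal.absNorm (J : Ideal (𝓞 K)) : ℝ) ^ s) using 2 with I
  rw [Real.rpow_neg hJ0.le]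
  have : (Ideal.absNorm (J : Ideal (𝓞 K)) : ℝ) ^ s ≠ 0 := (Real.rpow_pos_of_pos hJ0 s).ne'
  field_simp

end PartialZeta

section ClassZeta

variable {K : Type*} [Field K] [NumberField K]

/-- The partial zeta function of an ideal class. -/
noncomputable def classZeta (C : ClassGroup (𝓞 K)) (s : ℝ) : ℝ :=
  ∑' I : {I : nonZeroDivisors (Ideal (𝓞 K)) // ClassGroup.mk0 I = C},
    (Ideal.absNorm (I.1 : Ideal (𝓞 K)) : ℝ) ^ (-s)

lemma classZeta_nonneg (C : ClassGroup (𝓞 K)) (s : ℝ) : 0 ≤ classZeta C s :=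
  tsum_nonneg fun _ => by positivity

lemma absNorm_pos (J : nonZeroDivisors (Ideal (𝓞 K))) :
    0 < (Ideal.absNorm (J : Ideal (𝓞 K)) : ℝ) :=
  Nat.cast_pos.2 (Nat.pos_of_ne_zero (Ideal.absNorm_ne_zero_of_nonZeroDivisors J))

lemma one_le_absNorm (J : nonZeroDivisors (Ideal (𝓞 K))) :
    1 ≤ (Ideal.absNorm (J : Ideal (𝓞 K)) : ℝ) :=
  Nat.one_le_cast.2 (Nat.one_le_iff_ne_zero.2 (Ideal.absNorm_ne_zero_of_nonZeroDivisors J))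

lemma summable_classZeta (hdeg : Module.finrank ℚ K = 2) (C : ClassGroup (𝓞 K)) {s : ℝ}
    (hs : 1 < s) :
    Summable fun I : {I : nonZeroDivisors (Ideal (𝓞 K)) // ClassGroup.mk0 I = C} =>
      (Ideal.absNorm (I.1 : Ideal (𝓞 K)) : ℝ) ^ (-s) := by
  obtain ⟨σ, τ, hne, huniv⟩ := exists_two_embeddings hdeg
  obtain ⟨L, hL, c, hc, htent⟩ := exists_hasSum_tent hne huniv
  obtain ⟨J, hJ⟩ := ClassGroup.mk0_surjective C⁻¹
  exact (hasSum_absNorm_rpow_mk0_eq hdeg hne huniv hL hc htent J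
    (by rw [hJ, inv_mul_cancel]) hs).summable

lemma exists_abs_classZeta_one_sub_rpow_mul_le (hdeg : Module.finrank ℚ K = 2)
    (J : nonZeroDivisors (Ideal (𝓞 K))) {C : ClassGroup (𝓞 K)} (hJC : ClassGroup.mk0 J * C = 1) :
    ∃ B : ℝ, ∀ s ∈ Set.Ioc (1 : ℝ) 2,
      |classZeta (1 : ClassGroup (𝓞 K)) s -
        (Ideal.absNorm (J : Ideal (𝓞 K)) : ℝ) ^ (1 - s) * classZeta C s| ≤ B := by
  obtain ⟨σ, τ, hne, huniv⟩ := exists_two_embeddings hdeg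
  obtain ⟨L, hL, c, hc, htent⟩ := exists_hasSum_tent hne huniv
  have key (J : nonZeroDivisors (Ideal (𝓞 K))) {C : ClassGroup (𝓞 K)}
      (hJC : ClassGroup.mk0 J * C = 1) : ∃ B : ℝ, ∀ s ∈ Set.Ioc (1 : ℝ) 2,
      |∑' a, intWeight σ τ L s a -
        c * ((Ideal.absNorm (J : Ideal (𝓞 K)) : ℝ) ^ (1 - s) * classZeta C s)| ≤ B := by
    obtain ⟨B, hB⟩ := exists_abs_tsum_intWeight_sub_le hdeg hne huniv hL.le
      (nonZeroDivisors.coe_ne_zero J)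
    refine ⟨B, fun s hs => ?_⟩
    have hJ0 := absNorm_pos J
    rw [classZeta, (hasSum_absNorm_rpow_mk0_eq hdeg hne huniv hL hc htent J hJC hs.1).tsum_eq]
    refine le_trans (le_of_eq ?_) (hB s hs)
    have : (Ideal.absNorm (J : Ideal (𝓞 K)) : ℝ) ^ s ≠ 0 := (Real.rpow_pos_of_pos hJ0 s).ne'
    rw [Real.rpow_sub hJ0, Real.rpow_one]
    congr 2
    field_simp
  obtain ⟨B₁, h₁⟩ := key 1 (C := 1) (by rw [map_one, mul_one])
  obtain ⟨B₂, h₂⟩ := key J hJC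
  refine ⟨(B₁ + B₂) / c, fun s hs => ?_⟩
  have h1 := h₁ s hs
  have h2 := h₂ s hs
  rw [Submonoid.coe_one, map_one, Nat.cast_one, Real.one_rpow, one_mul] at h1
  rw [le_div_iff₀ hc, ← abs_of_pos hc, ← abs_mul]
  rw [abs_le] at *
  constructor <;> linarith

lemma exists_abs_classZeta_sub_le (hdeg : Module.finrank ℚ K = 2) (C : ClassGroup (𝓞 K)) :
    ∃ B : ℝ, ∀ s ∈ Set.Ioc (1 : ℝ) 2, |classZeta C s - classZeta (1 : ClassGroup (𝓞 K)) s| ≤ B := by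
  obtain ⟨J, hJ⟩ := ClassGroup.mk0_surjective C⁻¹
  obtain ⟨B₁, h₁⟩ := exists_abs_classZeta_one_sub_rpow_mul_le hdeg J (C := C)
    (by rw [hJ, inv_mul_cancel])
  set N := Ideal.absNorm (J : Ideal (𝓞 K)) with hN
  have hN0 : 0 < (N : ℝ) := absNorm_pos J
  have hN1 : 1 ≤ (N : ℝ) := one_le_absNorm J
  obtain ⟨J', hJ'⟩ : ∃ J' : nonZeroDivisors (Ideal (𝓞 K)),
      (J' : Ideal (𝓞 K)) = Ideal.span {(N : 𝓞 K)} :=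
    ⟨⟨_, mem_nonZeroDivisors_of_ne_zero <|
      Ideal.span_singleton_eq_bot.not.2 <|
        Nat.cast_ne_zero.2 <| Ideal.absNorm_ne_zero_of_nonZeroDivisors J⟩, rfl⟩
  have hmk : ClassGroup.mk0 J' = 1 := by
    rw [ClassGroup.mk0_eq_one_iff J'.2, hJ']
    exact ⟨⟨_, rfl⟩⟩
  obtain ⟨B₂, h₂⟩ := exists_abs_classZeta_one_sub_rpow_mul_le hdeg J' (C := 1)
    (by rw [hmk, mul_one])
  have hN' : Ideal.absNorm (J' : Ideal (𝓞 K)) = N ^ 2 := by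
    rw [hJ', Ideal.absNorm_span_natCast, RingOfIntegers.rank, hdeg]
  refine ⟨(B₁ + B₂) * N, fun s hs => ?_⟩
  have h1 := h₁ s hs
  have h2 := h₂ s hs
  set n := (N : ℝ) ^ (1 - s) with hn
  have hn2 : ((N ^ 2 : ℕ) : ℝ) ^ (1 - s) = n * n := by
    rw [Nat.cast_pow, sq, Real.mul_rpow hN0.le hN0.le]
  rw [hN', hn2] at h2
  have hn0 : 0 < n := Real.rpow_pos_of_pos hN0 _
  have hn1 : n ≤ 1 := Real.rpow_le_one_of_one_le_of_nonpos hN1 (by linarith [hs.1])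
  have hnN : 1 ≤ n * N := by
    calc (1 : ℝ) ≤ (N : ℝ) ^ (2 - s) := Real.one_le_rpow hN1 (by linarith [hs.2])
      _ = n * N := by
        rw [hn, ← Real.rpow_add_one hN0.ne']
        congr 1
        ring
  have hz := classZeta_nonneg (1 : ClassGroup (𝓞 K)) s
  have h3 : 0 ≤ (1 - n) * classZeta (1 : ClassGroup (𝓞 K)) s := mul_nonneg (by linarith) hz
  have h4 : 0 ≤ n * ((1 - n) * classZeta (1 : ClassGroup (𝓞 K)) s) := mul_nonneg hn0.le h3
  have h5 : |n * (classZeta C s - classZeta (1 : ClassGroup (𝓞 K)) s)| ≤ B₁ + B₂ := by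
    rw [abs_le] at *
    constructor <;> linarith
  calc |classZeta C s - classZeta (1 : ClassGroup (𝓞 K)) s| ≤ (n * N) * |classZeta C s - classZeta (1 : ClassGroup (𝓞 K)) s| :=
        le_mul_of_one_le_left (abs_nonneg _) hnN
    _ = |n * (classZeta C s - classZeta (1 : ClassGroup (𝓞 K)) s)| * N := by
        rw [abs_mul, abs_of_pos hn0]
        ring
    _ ≤ (B₁ + B₂) * N := by gcongr

lemma exists_forall_abs_classZeta_sub_le (hdeg : Module.finrank ℚ K = 2) :
    ∃ B : ℝ, ∀ C : ClassGroup (𝓞 K), ∀ s ∈ Set.Ioc (1 : ℝ) 2,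
      |classZeta C s - classZeta (1 : ClassGroup (𝓞 K)) s| ≤ B := by
  choose B hB using exists_abs_classZeta_sub_le hdeg
  refine ⟨∑ C, |B C|, fun C s hs => (hB C s hs).trans ((le_abs_self _).trans ?_)⟩
  exact Finset.single_le_sum (f := fun C => |B C|) (fun _ _ => abs_nonneg _) (Finset.mem_univ C)

lemma summable_absNorm_rpow (hdeg : Module.finrank ℚ K = 2) {s : ℝ} (hs : 1 < s) :
    Summable fun I : nonZeroDivisors (Ideal (𝓞 K)) =>
      (Ideal.absNorm (I : Ideal (𝓞 K)) : ℝ) ^ (-s) := by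
  rw [← (Equiv.sigmaFiberEquiv ClassGroup.mk0).summable_iff]
  exact (summable_sigma_of_nonneg fun _ => Real.rpow_nonneg (Nat.cast_nonneg _) _).2
    ⟨fun C => summable_classZeta hdeg C hs, (hasSum_fintype _).summable⟩

end ClassZeta

section ClassCharacter

lemma Summable.tsum_eq_sum_tsum_fiber {α β : Type*} [Fintype β] {f : α → ℂ} (hf : Summable f)
    (g : α → β) : ∑' a, f a = ∑ b, ∑' a : {a // g a = b}, f a := by
  rw [← (Equiv.sigmaFiberEquiv g).tsum_eq,
    Summable.tsum_sigma (f := fun a => f (Equiv.sigmaFiberEquiv g a))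
      ((Equiv.sigmaFiberEquiv g).summable_iff.2 hf), tsum_fintype]
  rfl

variable {K : Type*} [Field K]

lemma notMem_range_val_nonZeroDivisors {I : Ideal (𝓞 K)}
    (hI : I ∉ Set.range ((↑) : nonZeroDivisors (Ideal (𝓞 K)) → Ideal (𝓞 K))) : I = 0 := by
  by_contra h
  exact hI ⟨⟨I, mem_nonZeroDivisors_of_ne_zero h⟩, rfl⟩

/-- The nonzero divisor underlying a prime ideal. -/
def primeIdealNonZeroDivisor (P : {P : Ideal (𝓞 K) // Prime P}) : nonZeroDivisors (Ideal (𝓞 K)) :=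
  ⟨P.1, mem_nonZeroDivisors_of_ne_zero P.2.ne_zero⟩

lemma primeIdealNonZeroDivisor_injective :
    Function.Injective (primeIdealNonZeroDivisor (K := K)) := fun _ _ h =>
  Subtype.ext (congr_arg (fun I : nonZeroDivisors (Ideal (𝓞 K)) => (I : Ideal (𝓞 K))) h)

variable [NumberField K]

lemma mk0_mk_one (h : (1 : Ideal (𝓞 K)) ∈ nonZeroDivisors (Ideal (𝓞 K))) :
    ClassGroup.mk0 ⟨1, h⟩ = 1 := by
  have : (⟨1, h⟩ : nonZeroDivisors (Ideal (𝓞 K))) = 1 := rfl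
  rw [this, map_one]

lemma mk0_mk_mul {I J : Ideal (𝓞 K)} (hI : I ≠ 0) (hJ : J ≠ 0) :
    ClassGroup.mk0 ⟨I * J, mem_nonZeroDivisors_of_ne_zero (mul_ne_zero hI hJ)⟩ =
      ClassGroup.mk0 ⟨I, mem_nonZeroDivisors_of_ne_zero hI⟩ *
        ClassGroup.mk0 ⟨J, mem_nonZeroDivisors_of_ne_zero hJ⟩ := by
  rw [← map_mul]
  exact congr_arg _ (Subtype.ext rfl)

open scoped Classical in
/-- The completely multiplicative function `I ↦ ψ([I]) N(I)⁻ˢ` on ideals. -/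
noncomputable def classCharRpow (ψ : AddChar (Additive (ClassGroup (𝓞 K))) ℂ) (s : ℝ) :
    Ideal (𝓞 K) →*₀ ℂ where
  toFun I := if h : I = 0 then 0 else
    ψ (Additive.ofMul (ClassGroup.mk0 ⟨I, mem_nonZeroDivisors_of_ne_zero h⟩)) *
      (((Ideal.absNorm I : ℝ) ^ (-s) : ℝ) : ℂ)
  map_zero' := dif_pos rfl
  map_one' := by
    rw [dif_neg one_ne_zero, mk0_mk_one, ofMul_one, AddChar.map_zero_eq_one, one_mul,
      map_one Ideal.absNorm, Nat.cast_one, Real.one_rpow, Complex.ofReal_one]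
  map_mul' I J := by
    by_cases hI : I = 0
    · rw [dif_pos hI, zero_mul, dif_pos (by rw [hI, zero_mul])]
    by_cases hJ : J = 0
    · rw [dif_pos hJ, mul_zero, dif_pos (by rw [hJ, mul_zero])]
    rw [dif_neg (mul_ne_zero hI hJ), dif_neg hI, dif_neg hJ, mk0_mk_mul hI hJ,
      map_mul Ideal.absNorm, Nat.cast_mul, Real.mul_rpow (Nat.cast_nonneg _) (Nat.cast_nonneg _), ofMul_mul, AddChar.map_add_eq_mul,
      Complex.ofReal_mul]
    ring

lemma classCharRpow_apply (ψ : AddChar (Additive (ClassGroup (𝓞 K))) ℂ) (s : ℝ)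
    (I : nonZeroDivisors (Ideal (𝓞 K))) :
    classCharRpow ψ s (I : Ideal (𝓞 K)) = ψ (Additive.ofMul (ClassGroup.mk0 I)) *
      (((Ideal.absNorm (I : Ideal (𝓞 K)) : ℝ) ^ (-s) : ℝ) : ℂ) :=
  dif_neg (nonZeroDivisors.coe_ne_zero I)

lemma norm_classCharRpow (ψ : AddChar (Additive (ClassGroup (𝓞 K))) ℂ) (s : ℝ)
    (I : nonZeroDivisors (Ideal (𝓞 K))) :
    ‖classCharRpow ψ s (I : Ideal (𝓞 K))‖ = (Ideal.absNorm (I : Ideal (𝓞 K)) : ℝ) ^ (-s) := by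
  rw [classCharRpow_apply, norm_mul, AddChar.norm_apply, one_mul,
    Complex.norm_of_nonneg (by positivity)]

lemma summable_norm_classCharRpow (hdeg : Module.finrank ℚ K = 2)
    (ψ : AddChar (Additive (ClassGroup (𝓞 K))) ℂ) {s : ℝ} (hs : 1 < s) :
    Summable fun I => ‖classCharRpow ψ s I‖ := by
  refine (Subtype.val_injective.summable_iff (g := ((↑) : nonZeroDivisors (Ideal (𝓞 K)) → _))
    fun I hI => ?_).1 ?_
  · rw [notMem_range_val_nonZeroDivisors hI, map_zero, norm_zero]
  · exact (summable_absNorm_rpow hdeg hs).congr fun I => (norm_classCharRpow ψ s I).symm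

lemma tsum_classCharRpow (hdeg : Module.finrank ℚ K = 2)
    (ψ : AddChar (Additive (ClassGroup (𝓞 K))) ℂ) {s : ℝ} (hs : 1 < s) :
    ∑' I, classCharRpow ψ s I =
      ∑ C : ClassGroup (𝓞 K), ψ (Additive.ofMul C) * (classZeta C s : ℂ) := by
  have hsum : Summable fun I : nonZeroDivisors (Ideal (𝓞 K)) =>
      classCharRpow ψ s (I : Ideal (𝓞 K)) :=
    (summable_norm_classCharRpow hdeg ψ hs).of_norm.comp_injective Subtype.val_injective
  have hsupp : Function.support (classCharRpow ψ s) ⊆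
      Set.range ((↑) : nonZeroDivisors (Ideal (𝓞 K)) → Ideal (𝓞 K)) := by
    intro I hI
    by_contra h
    exact hI (by rw [notMem_range_val_nonZeroDivisors h, map_zero])
  rw [← Subtype.val_injective.tsum_eq hsupp,
    hsum.tsum_eq_sum_tsum_fiber fun I => ClassGroup.mk0 I]
  refine Finset.sum_congr rfl fun C _ => ?_
  rw [classZeta, Complex.ofReal_tsum, ← tsum_mul_left]
  refine tsum_congr fun I => ?_
  have := classCharRpow_apply ψ s I.1
  rwa [I.2] at this

/-- The `L`-series of the nontrivial class group characters are bounded near `s = 1`. -/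
lemma exists_norm_tsum_classCharRpow_le (hdeg : Module.finrank ℚ K = 2) :
    ∃ B : ℝ, ∀ ψ : AddChar (Additive (ClassGroup (𝓞 K))) ℂ, ψ ≠ 0 → ∀ s ∈ Set.Ioc (1 : ℝ) 2,
      ‖∑' I, classCharRpow ψ s I‖ ≤ B := by
  obtain ⟨B, hB⟩ := exists_forall_abs_classZeta_sub_le hdeg
  refine ⟨∑ _C : ClassGroup (𝓞 K), B, fun ψ hψ s hs => ?_⟩
  have h0 : ∑ C : ClassGroup (𝓞 K), ψ (Additive.ofMul C) = 0 := 
    (Additive.ofMul.sum_comp ψ).trans (AddChar.sum_eq_zero_iff_ne_zero.2 hψ)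
  have h1 : ∑ C : ClassGroup (𝓞 K), ψ (Additive.ofMul C) * (classZeta C s : ℂ) =
      ∑ C : ClassGroup (𝓞 K), ψ (Additive.ofMul C) *
        ((classZeta C s - classZeta (1 : ClassGroup (𝓞 K)) s : ℝ) : ℂ) := by
    simp_rw [Complex.ofReal_sub, mul_sub, Finset.sum_sub_distrib]
    rw [← Finset.sum_mul, h0, zero_mul, sub_zero]
  rw [tsum_classCharRpow hdeg ψ hs.1, h1]
  refine (norm_sum_le _ _).trans (Finset.sum_le_sum fun C _ => ?_)
  rw [norm_mul, AddChar.norm_apply, one_mul, Complex.norm_real]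
  exact hB C s hs

lemma summable_prime_absNorm_rpow (hdeg : Module.finrank ℚ K = 2) {s : ℝ} (hs : 1 < s) :
    Summable fun P : {P : Ideal (𝓞 K) // Prime P} => (Ideal.absNorm P.1 : ℝ) ^ (-s) := by
  have := (summable_absNorm_rpow hdeg hs).comp_injective primeIdealNonZeroDivisor_injective
  exact this.congr fun P => rfl

/-- For a nontrivial class group character `ψ`, the sums `∑ Re ψ([P]) N(P)⁻ˢ` over prime ideals are
bounded above near `s = 1`. -/
lemma exists_tsum_prime_re_le (hdeg : Module.finrank ℚ K = 2) :
    ∃ B : ℝ, ∀ ψ : AddChar (Additive (ClassGroup (𝓞 K))) ℂ, ψ ≠ 0 → ∀ s ∈ Set.Ioc (1 : ℝ) 2,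
      ∑' P : {P : Ideal (𝓞 K) // Prime P},
        (ψ (Additive.ofMul (ClassGroup.mk0 (primeIdealNonZeroDivisor P)))).re *
          (Ideal.absNorm P.1 : ℝ) ^ (-s) ≤ B := by
  obtain ⟨B, hB⟩ := exists_norm_tsum_classCharRpow_le hdeg
  have h2 := summable_prime_absNorm_rpow hdeg one_lt_two
  refine ⟨Real.log B + (∑' P : {P : Ideal (𝓞 K) // Prime P},
    (Ideal.absNorm P.1 : ℝ) ^ (-2 : ℝ)) / 2, fun ψ hψ s hs => ?_⟩
  have hle (P : {P : Ideal (𝓞 K) // Prime P}) :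
      ‖classCharRpow ψ s P.1‖ ^ 2 ≤ (Ideal.absNorm P.1 : ℝ) ^ (-2 : ℝ) := by
    have h1 : ‖classCharRpow ψ s P.1‖ = (Ideal.absNorm P.1 : ℝ) ^ (-s) :=
      norm_classCharRpow ψ s (primeIdealNonZeroDivisor P)
    have hN : 1 ≤ (Ideal.absNorm P.1 : ℝ) := one_le_absNorm (primeIdealNonZeroDivisor P)
    rw [h1, ← Real.rpow_mul_natCast (by linarith)]
    exact Real.rpow_le_rpow_of_exponent_le hN (by push_cast; linarith [hs.1])
  have hsq : Summable fun P : {P : Ideal (𝓞 K) // Prime P} => ‖classCharRpow ψ s P.1‖ ^ 2 :=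
    .of_nonneg_of_le (fun _ => by positivity) hle h2
  have key := tsum_re_le_log_norm_tsum (classCharRpow ψ s)
    (summable_norm_classCharRpow hdeg ψ hs.1) hsq (hB ψ hψ s hs)
  have hre (P : {P : Ideal (𝓞 K) // Prime P}) : (classCharRpow ψ s P.1).re =
      (ψ (Additive.ofMul (ClassGroup.mk0 (primeIdealNonZeroDivisor P)))).re *
        (Ideal.absNorm P.1 : ℝ) ^ (-s) := by
    have := classCharRpow_apply ψ s (primeIdealNonZeroDivisor P)
    rw [show ((primeIdealNonZeroDivisor P : nonZeroDivisors (Ideal (𝓞 K))) : Ideal (𝓞 K)) = P.1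
      from rfl] at this
    rw [this, Complex.re_mul_ofReal]
  simp_rw [hre] at key
  have := hsq.tsum_le_tsum hle h2
  linarith

open scoped Classical in
lemma sum_one_sub_re_mul_re {G : Type*} [CommGroup G] [Fintype G] {h c : G} (h1 : c ≠ h)
    (h2 : c ≠ h⁻¹) :
    ∑ ψ : AddChar (Additive G) ℂ, (1 - (ψ (Additive.ofMul h)).re) * (ψ (Additive.ofMul c)).re =
      if c = 1 then (Fintype.card G : ℝ) else 0 := by
  have hre (x : G) : ∑ ψ : AddChar (Additive G) ℂ, (ψ (Additive.ofMul x)).re =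
      if x = 1 then (Fintype.card G : ℝ) else 0 := by
    have := congr_arg Complex.re (AddChar.sum_apply_eq_ite (Additive.ofMul x))
    rw [Complex.re_sum] at this
    rw [this]
    by_cases hx : x = 1 <;> simp [hx]
  have hprod (ψ : AddChar (Additive G) ℂ) :
      (1 - (ψ (Additive.ofMul h)).re) * (ψ (Additive.ofMul c)).re =
      (ψ (Additive.ofMul c)).re -
        ((ψ (Additive.ofMul (c * h))).re + (ψ (Additive.ofMul (c * h⁻¹))).re) / 2 := by
    rw [ofMul_mul, ofMul_mul, ofMul_inv, AddChar.map_add_eq_mul, AddChar.map_add_eq_mul,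
      AddChar.map_neg_eq_conj, Complex.mul_re, Complex.mul_re, Complex.conj_re, Complex.conj_im]
    ring
  simp_rw [hprod, Finset.sum_sub_distrib, ← Finset.sum_div, Finset.sum_add_distrib, hre]
  rw [if_neg (fun h => h2 (eq_inv_of_mul_eq_one_left h)),
    if_neg (fun h => h1 (mul_inv_eq_one.1 h)), add_zero, zero_div, sub_zero]

open scoped Classical in
/-- If no prime ideal lies in the classes `h` and `h⁻¹`, the sum of `N(P)⁻ˢ` over the principal
prime ideals stays bounded near `s = 1`. -/
lemma exists_tsum_principal_prime_le (hdeg : Module.finrank ℚ K = 2) {h : ClassGroup (𝓞 K)}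
    (hh : ∀ P : {P : Ideal (𝓞 K) // Prime P}, ClassGroup.mk0 (primeIdealNonZeroDivisor P) ≠ h ∧
      ClassGroup.mk0 (primeIdealNonZeroDivisor P) ≠ h⁻¹) :
    ∃ B : ℝ, ∀ s ∈ Set.Ioc (1 : ℝ) 2, ∑' P : {P : Ideal (𝓞 K) // Prime P},
      (if ClassGroup.mk0 (primeIdealNonZeroDivisor P) = 1 then
        (Ideal.absNorm P.1 : ℝ) ^ (-s) else 0) ≤ B := by
  obtain ⟨B, hB⟩ := exists_tsum_prime_re_le hdeg
  set n : ℝ := ((Fintype.card (ClassGroup (𝓞 K)) : ℕ) : ℝ) with hn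
  have hn0 : 0 < n := Nat.cast_pos.2 Fintype.card_pos
  refine ⟨(∑ ψ : AddChar (Additive (ClassGroup (𝓞 K))) ℂ,
    (1 - (ψ (Additive.ofMul h)).re) * B) / n, fun s hs => ?_⟩
  have hsum := summable_prime_absNorm_rpow hdeg hs.1
  have hsumψ (ψ : AddChar (Additive (ClassGroup (𝓞 K))) ℂ) :
      Summable fun P : {P : Ideal (𝓞 K) // Prime P} =>
        (ψ (Additive.ofMul (ClassGroup.mk0 (primeIdealNonZeroDivisor P)))).re *
          (Ideal.absNorm P.1 : ℝ) ^ (-s) := by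
    refine .of_norm_bounded hsum fun P => ?_
    rw [norm_mul, Real.norm_of_nonneg (r := (_ : ℝ) ^ (-s)) (by positivity)]
    refine mul_le_of_le_one_left (by positivity) ?_
    exact (Complex.abs_re_le_norm _).trans (AddChar.norm_apply _ _).le
  rw [le_div_iff₀ hn0, mul_comm, ← tsum_mul_left]
  have hP (P : {P : Ideal (𝓞 K) // Prime P}) :
      n * (if ClassGroup.mk0 (primeIdealNonZeroDivisor P) = 1 then
        (Ideal.absNorm P.1 : ℝ) ^ (-s) else 0) =
      ∑ ψ : AddChar (Additive (ClassGroup (𝓞 K))) ℂ, (1 - (ψ (Additive.ofMul h)).re) *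
        ((ψ (Additive.ofMul (ClassGroup.mk0 (primeIdealNonZeroDivisor P)))).re *
          (Ideal.absNorm P.1 : ℝ) ^ (-s)) := by
    simp_rw [← mul_assoc]
    rw [← Finset.sum_mul, sum_one_sub_re_mul_re (hh P).1 (hh P).2, mul_ite, ite_mul, mul_zero,
      zero_mul]
  rw [tsum_congr hP, Summable.tsum_finsetSum fun ψ _ => (hsumψ ψ).mul_left _]
  refine Finset.sum_le_sum fun ψ _ => ?_
  rw [tsum_mul_left]
  by_cases hψ : ψ = 0
  · simp [hψ]
  · refine mul_le_mul_of_nonneg_left (hB ψ hψ s hs) (sub_nonneg.2 ?_)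
    exact (Complex.re_le_norm _).trans (AddChar.norm_apply _ _).le

lemma NormClosedUnderDivision.sq_eq_one (hdiv : NormClosedUnderDivision K)
    (hdeg : Module.finrank ℚ K = 2) (g : ClassGroup (𝓞 K)) : g ^ 2 = 1 := by
  classical
  by_contra hg
  have hh (P : {P : Ideal (𝓞 K) // Prime P}) :
      ClassGroup.mk0 (primeIdealNonZeroDivisor P) ≠ g ^ 2 ∧
        ClassGroup.mk0 (primeIdealNonZeroDivisor P) ≠ (g ^ 2)⁻¹ := by
    refine ⟨fun h => ?_, fun h => ?_⟩
    · exact hg (h.symm.trans (hdiv.mk0_prime_eq_one hdeg (primeIdealNonZeroDivisor P) P.2 g h))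
    · have h1 := hdiv.mk0_prime_eq_one hdeg (primeIdealNonZeroDivisor P) P.2 g⁻¹
        (by rw [h, inv_pow])
      exact hg (inv_eq_one.1 (h.symm.trans h1))
  obtain ⟨B, hB⟩ := exists_tsum_principal_prime_le hdeg hh
  obtain ⟨q, hq, hnorm⟩ := hdiv.exists_prime_norms hdeg
  have : NeZero q := ⟨hq⟩
  obtain ⟨s, hs, hlt⟩ := exists_lt_tsum_rpow_prime_residueClass (q := q) (a := 1) isUnit_one B
  refine absurd (hB s hs) (not_le.2 (hlt.trans_le ?_))
  choose! c hc using hnorm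
  have habs (p : {p : ℕ | p.Prime ∧ (p : ZMod q) = 1}) :
      Ideal.absNorm (Ideal.span {c p}) = p := by
    rw [Ideal.absNorm_span_singleton, hc p p.2.1 p.2.2]
  have hprime (p : {p : ℕ | p.Prime ∧ (p : ZMod q) = 1}) : Prime (Ideal.span {c p}) := by
    refine (Ideal.irreducible_of_irreducible_absNorm ?_).prime
    rw [habs p]
    exact p.2.1
  let j : {p : ℕ | p.Prime ∧ (p : ZMod q) = 1} → {P : Ideal (𝓞 K) // Prime P} := fun p =>
    ⟨Ideal.span {c p}, hprime p⟩
  have hj : Function.Injective j := by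
    intro p p' h
    have hspan : Ideal.span {c p} = Ideal.span {c p'} := congr_arg Subtype.val h
    exact Subtype.ext (by rw [← habs p, hspan, habs p'])
  have hsumg : Summable fun P : {P : Ideal (𝓞 K) // Prime P} =>
      if ClassGroup.mk0 (primeIdealNonZeroDivisor P) = 1 then
        (Ideal.absNorm P.1 : ℝ) ^ (-s) else 0 := by
    refine .of_nonneg_of_le (fun P => ?_) (fun P => ?_) (summable_prime_absNorm_rpow hdeg hs.1)
    · split_ifs <;> positivity
    · split_ifs
      · exact le_rfl
      · positivity
  have hval (p) : (if ClassGroup.mk0 (primeIdealNonZeroDivisor (j p)) = 1 then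
      (Ideal.absNorm (j p).1 : ℝ) ^ (-s) else 0) = (p : ℝ) ^ (-s) := by
    have : ClassGroup.mk0 (primeIdealNonZeroDivisor (j p)) = 1 := by
      rw [ClassGroup.mk0_eq_one_iff (primeIdealNonZeroDivisor (j p)).2]
      exact ⟨⟨c p, rfl⟩⟩
    rw [if_pos this]
    congr 2
    exact habs p
  rw [← tsum_subtype, ← tsum_congr hval]
  refine tsum_comp_le_tsum_of_inj hsumg (fun P => ?_) hj
  split_ifs <;> positivity

end ClassCharacter

/-- let `K` be a quadratic number field whose ring of integers is
nonfactorial. If the image of the absolute norm `N` is closed under division,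
then every element of the class group squares to the identity (equivalently,
the class group is a finite product of copies of `ℤ/2ℤ`). -/
theorem stmt_12 (K : Type*) [Field K] [NumberField K]
    (hdeg : Module.finrank ℚ K = 2)
    (hnf : Nontrivial (ClassGroup (𝓞 K)))
    (hdiv : ∀ a b : 𝓞 K, a ≠ 0 → b ≠ 0 →
      (Algebra.norm ℤ a).natAbs ∣ (Algebra.norm ℤ b).natAbs →
      ∃ c : 𝓞 K,
        (Algebra.norm ℤ a).natAbs * (Algebra.norm ℤ c).natAbs =
          (Algebra.norm ℤ b).natAbs) :
    ∀ g : ClassGroup (𝓞 K), g ^ 2 = 1 := by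
  exact NormClosedUnderDivision.sq_eq_one hdiv hdeg
end
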